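/- arXiv:2509.16299 — 17 statements merged into one kernel-verified Lean document; each statement's English description precedes it below -/
import Mathlib

section
/- Let U₁, U₂ : [0,1]² → [0,1] be disjunctive uninorms with the same neutral element e ∈ (0,1), and let N₁, N₂ : [0,1] → [0,1] be continuous fuzzy negations such that U₁(N₁(x), y) = U₂(N₂(x), y) for all x, y ∈ [0,1]. Then N₁ = N₂ and U₁ = U₂. -/
/-- A uninorm on `[0,1]` with neutral element `e`: commutative, associative,
increasing in each variable, `U x e = x`, mapping `[0,1]²` into `[0,1]`. -/
def IsUninorm (U : ℝ → ℝ → ℝ) (e : ℝ) : Prop :=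
  e ∈ Set.Icc (0:ℝ) 1 ∧
  (∀ x ∈ Set.Icc (0:ℝ) 1, ∀ y ∈ Set.Icc (0:ℝ) 1, U x y ∈ Set.Icc (0:ℝ) 1) ∧
  (∀ x ∈ Set.Icc (0:ℝ) 1, ∀ y ∈ Set.Icc (0:ℝ) 1, U x y = U y x) ∧
  (∀ x ∈ Set.Icc (0:ℝ) 1, ∀ y ∈ Set.Icc (0:ℝ) 1, ∀ z ∈ Set.Icc (0:ℝ) 1,
    U (U x y) z = U x (U y z)) ∧
  (∀ x ∈ Set.Icc (0:ℝ) 1, ∀ y ∈ Set.Icc (0:ℝ) 1, ∀ z ∈ Set.Icc (0:ℝ) 1,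
    y ≤ z → U x y ≤ U x z) ∧
  (∀ x ∈ Set.Icc (0:ℝ) 1, ∀ y ∈ Set.Icc (0:ℝ) 1, ∀ z ∈ Set.Icc (0:ℝ) 1,
    x ≤ y → U x z ≤ U y z) ∧
  (∀ x ∈ Set.Icc (0:ℝ) 1, U x e = x)

/-- A fuzzy negation on `[0,1]`: `N 0 = 1`, `N 1 = 0`, decreasing,
mapping `[0,1]` into `[0,1]`. -/
def IsFuzzyNegation (N : ℝ → ℝ) : Prop :=
  (∀ x ∈ Set.Icc (0:ℝ) 1, N x ∈ Set.Icc (0:ℝ) 1) ∧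
  N 0 = 1 ∧ N 1 = 0 ∧
  (∀ x ∈ Set.Icc (0:ℝ) 1, ∀ y ∈ Set.Icc (0:ℝ) 1, x ≤ y → N y ≤ N x)

theorem stmt2 (U₁ U₂ : ℝ → ℝ → ℝ) (e : ℝ) (he : e ∈ Set.Ioo (0:ℝ) 1)
    (hU₁ : IsUninorm U₁ e) (hU₂ : IsUninorm U₂ e)
    (hd₁ : U₁ 1 0 = 1) (hd₂ : U₂ 1 0 = 1)
    (N₁ N₂ : ℝ → ℝ) (hN₁ : IsFuzzyNegation N₁) (hN₂ : IsFuzzyNegation N₂)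
    (hN₁c : ContinuousOn N₁ (Set.Icc 0 1)) (hN₂c : ContinuousOn N₂ (Set.Icc 0 1))
    (heq : ∀ x ∈ Set.Icc (0:ℝ) 1, ∀ y ∈ Set.Icc (0:ℝ) 1, U₁ (N₁ x) y = U₂ (N₂ x) y) :
    (∀ x ∈ Set.Icc (0:ℝ) 1, N₁ x = N₂ x) ∧
    (∀ x ∈ Set.Icc (0:ℝ) 1, ∀ y ∈ Set.Icc (0:ℝ) 1, U₁ x y = U₂ x y) := by
  have hN : ∀ x ∈ Set.Icc (0:ℝ) 1, N₁ x = N₂ x := by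
    intro x hx
    have h := heq x hx e hU₁.1
    rwa [hU₁.2.2.2.2.2.2 _ (hN₁.1 x hx), hU₂.2.2.2.2.2.2 _ (hN₂.1 x hx)] at h
  refine ⟨hN, ?_⟩
  intro x hx y hy
  have hs := intermediate_value_Icc' (zero_le_one (α := ℝ)) hN₁c
  rw [hN₁.2.1, hN₁.2.2.1] at hs
  obtain ⟨t, ht, rfl⟩ := hs hx
  have h := heq t ht y hy
  rwa [← hN t ht] at h
end

section
/- The function U₂ : [0,1]² → [0,1] defined by U₂(x,y) = 3xy / (3xy + (1−x)(1−y)) for (x,y) ∈ [0,1]² \ {(0,1),(1,0)} and U₂(0,1) = U₂(1,0) = 1 is a disjunctive uninorm with neutral element 1/4, i.e., it is commutative, associative, increasing in each variable, satisfies U₂(x, 1/4) = x for all x ∈ [0,1], and U₂(1,0) = 1. -/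
open Classical in
/-- The uninorm `U₂` of Example 1. -/
noncomputable def Uex2 : ℝ → ℝ → ℝ := fun x y =>
  if (x = 0 ∧ y = 1) ∨ (x = 1 ∧ y = 0) then 1
  else 3*x*y / (3*x*y + (1-x)*(1-y))

theorem Uex2_comm (x y : ℝ) : Uex2 x y = Uex2 y x := by
  unfold Uex2
  have h : ((x = 0 ∧ y = 1) ∨ (x = 1 ∧ y = 0)) ↔ ((y = 0 ∧ x = 1) ∨ (y = 1 ∧ x = 0)) := by tauto
  simp only [h]
  congr 1
  ring

theorem Uex2_one_left (y : ℝ) : Uex2 1 y = 1 := by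
  unfold Uex2
  by_cases h : y = 0
  · simp [h]
  · simp [h]

theorem Uex2_one_right (x : ℝ) : Uex2 x 1 = 1 := by
  rw [Uex2_comm, Uex2_one_left]

theorem Uex2_formula {x y : ℝ} (hx : x < 1) (hy : y < 1) :
    Uex2 x y = 3*x*y / (3*x*y + (1-x)*(1-y)) := by
  unfold Uex2
  rw [if_neg]
  rintro (⟨_, h⟩ | ⟨h, _⟩) <;> linarith

theorem Uex2_den {x y : ℝ} (hx0 : 0 ≤ x) (hy0 : 0 ≤ y) (hx : x < 1) (hy : y < 1) :
    0 < 3*x*y + (1-x)*(1-y) := by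
  have h1 : 0 < (1-x)*(1-y) := mul_pos (by linarith) (by linarith)
  have h2 : 0 ≤ 3*x*y := by positivity
  linarith

theorem Uex2_nonneg {x y : ℝ} (hx0 : 0 ≤ x) (hy0 : 0 ≤ y) (hx : x < 1) (hy : y < 1) :
    0 ≤ Uex2 x y := by
  rw [Uex2_formula hx hy]
  exact div_nonneg (by positivity) (Uex2_den hx0 hy0 hx hy).le

theorem Uex2_lt_one {x y : ℝ} (hx0 : 0 ≤ x) (hy0 : 0 ≤ y) (hx : x < 1) (hy : y < 1) :
    Uex2 x y < 1 := by
  rw [Uex2_formula hx hy, div_lt_one (Uex2_den hx0 hy0 hx hy)]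
  have h1 : 0 < (1-x)*(1-y) := mul_pos (by linarith) (by linarith)
  linarith

theorem Uex2_triple {x y z : ℝ} (hx0 : 0 ≤ x) (hy0 : 0 ≤ y) (hz0 : 0 ≤ z)
    (hx : x < 1) (hy : y < 1) (hz : z < 1) :
    Uex2 (Uex2 x y) z = 9*x*y*z / (9*x*y*z + (1-x)*(1-y)*(1-z)) := by
  have hD := Uex2_den hx0 hy0 hx hy
  have hE := Uex2_den (Uex2_nonneg hx0 hy0 hx hy) hz0 (Uex2_lt_one hx0 hy0 hx hy) hz
  rw [Uex2_formula (Uex2_lt_one hx0 hy0 hx hy) hz]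
  have h1 : 0 < (1-x)*(1-y)*(1-z) :=
    mul_pos (mul_pos (by linarith) (by linarith)) (by linarith)
  have h2 : 0 ≤ 9*x*y*z := by positivity
  rw [div_eq_div_iff hE.ne' (by linarith)]
  have key : Uex2 x y * (3*x*y + (1-x)*(1-y)) = 3*x*y := by
    rw [Uex2_formula hx hy]
    exact div_mul_cancel₀ _ hD.ne'
  linear_combination 3*z*(1-z)*key

theorem Uex2_mem {x y : ℝ} (hx : x ∈ Set.Icc (0:ℝ) 1) (hy : y ∈ Set.Icc (0:ℝ) 1) :
    Uex2 x y ∈ Set.Icc (0:ℝ) 1 := by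
  rcases hx.2.eq_or_lt with rfl | hx1
  · simp [Uex2_one_left]
  rcases hy.2.eq_or_lt with rfl | hy1
  · simp [Uex2_one_right]
  exact ⟨Uex2_nonneg hx.1 hy.1 hx1 hy1, (Uex2_lt_one hx.1 hy.1 hx1 hy1).le⟩

theorem Uex2_mono {x y z : ℝ} (hx : x ∈ Set.Icc (0:ℝ) 1) (hy : y ∈ Set.Icc (0:ℝ) 1)
    (hz : z ∈ Set.Icc (0:ℝ) 1) (hyz : y ≤ z) : Uex2 x y ≤ Uex2 x z := by
  rcases hx.2.eq_or_lt with rfl | hx1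
  · simp [Uex2_one_left]
  rcases hz.2.eq_or_lt with rfl | hz1
  · rw [Uex2_one_right]
    exact (Uex2_mem hx hy).2
  have hy1 : y < 1 := hyz.trans_lt hz1
  rw [Uex2_formula hx1 hy1, Uex2_formula hx1 hz1,
    div_le_div_iff₀ (Uex2_den hx.1 hy.1 hx1 hy1) (Uex2_den hx.1 hz.1 hx1 hz1)]
  have h : 0 ≤ x * (1-x) * (z-y) :=
    mul_nonneg (mul_nonneg hx.1 (by linarith)) (by linarith)
  linarith [h]

theorem stmt3 : IsUninorm Uex2 (1/4) ∧ Uex2 1 0 = 1 := by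
  refine ⟨⟨by norm_num, fun x hx y hy => Uex2_mem hx hy, fun x _ y _ => Uex2_comm x y, ?_,
    fun x hx y hy z hz h => Uex2_mono hx hy hz h, ?_, ?_⟩, Uex2_one_left 0⟩
  · intro x hx y hy z hz
    rcases hx.2.eq_or_lt with rfl | hx1
    · simp [Uex2_one_left]
    rcases hy.2.eq_or_lt with rfl | hy1
    · simp [Uex2_one_left, Uex2_one_right]
    rcases hz.2.eq_or_lt with rfl | hz1
    · simp [Uex2_one_right]
    rw [Uex2_comm x (Uex2 y z), Uex2_triple hx.1 hy.1 hz.1 hx1 hy1 hz1,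
      Uex2_triple hy.1 hz.1 hx.1 hy1 hz1 hx1]
    congr 1 <;> ring
  · intro x hx y hy z hz h
    rw [Uex2_comm x z, Uex2_comm y z]
    exact Uex2_mono hz hx hy h
  · intro x hx
    rcases hx.2.eq_or_lt with rfl | hx1
    · exact Uex2_one_left _
    rw [Uex2_formula hx1 (by norm_num)]
    have : 3*x*(1/4) + (1-x)*(1-1/4) = 3/4 := by ring
    rw [this]
    ring
end

section
/- Define N₁, N₂ : [0,1] → [0,1] by N₁(x) = 1 − x and N₂(x) = (1−x)/(1+2x), and define U₁, U₂ : [0,1]² → [0,1] by U₁(x,y) = xy/(xy + (1−x)(1−y)) and U₂(x,y) = 3xy/(3xy + (1−x)(1−y)) for (x,y) ∈ [0,1]² \ {(0,1),(1,0)}, with U₁(0,1) = U₁(1,0) = U₂(0,1) = U₂(1,0) = 1. Then U₁(N₁(x), y) = U₂(N₂(x), y) for all x, y ∈ [0,1]; moreover, for (x,y) ∈ [0,1]² \ {(0,0),(1,1)} the common value equals (1−x)y / ((1−x)y + x(1−y)), and at (x,y) = (0,0) and (x,y) = (1,1) the common value equals 1. -/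
/-- The negation `N₁` of Example 1. -/
noncomputable def Nex1 : ℝ → ℝ := fun x => 1 - x

/-- The negation `N₂` of Example 1. -/
noncomputable def Nex2 : ℝ → ℝ := fun x => (1 - x) / (1 + 2*x)

open Classical in
/-- The uninorm `U₁` of Example 1. -/
noncomputable def Uex1 : ℝ → ℝ → ℝ := fun x y =>
  if (x = 0 ∧ y = 1) ∨ (x = 1 ∧ y = 0) then 1
  else x*y / (x*y + (1-x)*(1-y))

theorem stmt4 :
    (∀ x ∈ Set.Icc (0:ℝ) 1, ∀ y ∈ Set.Icc (0:ℝ) 1, Uex1 (Nex1 x) y = Uex2 (Nex2 x) y) ∧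
    (∀ x ∈ Set.Icc (0:ℝ) 1, ∀ y ∈ Set.Icc (0:ℝ) 1, ¬(x = 0 ∧ y = 0) → ¬(x = 1 ∧ y = 1) →
      Uex1 (Nex1 x) y = (1-x)*y / ((1-x)*y + x*(1-y))) ∧
    Uex1 (Nex1 0) 0 = 1 ∧ Uex1 (Nex1 1) 1 = 1 ∧
    Uex2 (Nex2 0) 0 = 1 ∧ Uex2 (Nex2 1) 1 = 1 := by
  refine ⟨?_, ?_, ?_, ?_, ?_, ?_⟩
  · intro x hx y hy
    have hx0 : (0:ℝ) ≤ x := hx.1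
    have hd : (1 + 2*x) ≠ 0 := by positivity
    have h1 : (1 - x) / (1 + 2*x) = 0 ↔ 1 - x = 0 := by
      rw [div_eq_zero_iff]
      exact or_iff_left hd
    have h2 : (1 - x) / (1 + 2*x) = 1 ↔ 1 - x = 1 := by
      rw [div_eq_one_iff_eq hd]
      constructor <;> intro h <;> linarith
    have hc : (3 / (1 + 2*x)) ≠ 0 := div_ne_zero (by norm_num) hd
    have e1 : 3 * ((1 - x) / (1 + 2*x)) * y = (3 / (1 + 2*x)) * ((1 - x) * y) := by ring
    have e2 : (1 - (1 - x) / (1 + 2*x)) * (1 - y)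
        = (3 / (1 + 2*x)) * ((1 - (1 - x)) * (1 - y)) := by
      field_simp
      ring
    have hN : Nex1 x = 1 - x := rfl
    have hM : Nex2 x = (1 - x) / (1 + 2*x) := rfl
    rw [hN, hM]
    simp only [Uex1, Uex2, h1, h2]
    rw [e1, e2, ← mul_add, mul_div_mul_left _ _ hc]
  · intro x hx y hy h0 h1
    have hN : Nex1 x = 1 - x := rfl
    rw [hN]
    unfold Uex1
    rw [if_neg, sub_sub_cancel]
    rintro (⟨h, h'⟩ | ⟨h, h'⟩)
    · exact h1 ⟨by linarith, h'⟩
    · exact h0 ⟨by linarith, h'⟩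
  all_goals norm_num [Uex1, Uex2, Nex1, Nex2]
end

section
/- Let N₁, N₂ : [0,1] → [0,1] be continuous fuzzy negations and U₁, U₂ : [0,1]² → [0,1] disjunctive uninorms with neutral elements e₁, e₂ ∈ (0,1) respectively, such that U₁(N₁(x), y) = U₂(N₂(x), y) for all x, y ∈ [0,1]. If e₁ ≠ e₂, or N₁ ≠ N₂, or U₁ ≠ U₂, then: (i) e₁ ≠ e₂ and N₁ ≠ N₂ and U₁ ≠ U₂; (ii) the function f₁ : [0,1] → [0,1] given by f₁(x) = U₁(x, e₂) is continuous and increasing with f₁(0) = 0 and f₁(1) = 1; (iii) the function f₂ : [0,1] → [0,1] given by f₂(x) = U₂(x, e₁) is continuous and increasing with f₂(0) = 0 and f₂(1) = 1. -/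
theorem cont_aux (f : ℝ → ℝ) (hm : MonotoneOn f (Set.Icc 0 1))
    (hmaps : Set.MapsTo f (Set.Icc 0 1) (Set.Icc 0 1))
    (hs : Set.SurjOn f (Set.Icc 0 1) (Set.Icc 0 1)) : ContinuousOn f (Set.Icc 0 1) := by
  rw [continuousOn_iff_continuous_domRestrict]
  have h1 : Monotone hmaps.restrict := fun a b hab => hm a.2 b.2 hab
  have h2 : Function.Surjective hmaps.restrict := by
    rintro ⟨y, hy⟩
    obtain ⟨x, hx, rfl⟩ := hs hy
    exact ⟨⟨x, hx⟩, rfl⟩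
  exact continuous_subtype_val.comp (h1.continuous_of_surjective h2)

theorem neg_surj (N : ℝ → ℝ) (hN : IsFuzzyNegation N) (hc : ContinuousOn N (Set.Icc 0 1)) :
    Set.SurjOn N (Set.Icc 0 1) (Set.Icc 0 1) := by
  have h := intermediate_value_Icc' (zero_le_one (α := ℝ)) hc
  rw [hN.2.1, hN.2.2.1] at h
  exact h

theorem half_aux (N₁ N₂ : ℝ → ℝ) (hN₁ : IsFuzzyNegation N₁) (hN₂ : IsFuzzyNegation N₂)
    (hN₂c : ContinuousOn N₂ (Set.Icc 0 1))
    (U₁ U₂ : ℝ → ℝ → ℝ) (e₁ e₂ : ℝ)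
    (hU₁ : IsUninorm U₁ e₁) (hU₂ : IsUninorm U₂ e₂)
    (heq : ∀ x ∈ Set.Icc (0:ℝ) 1, ∀ y ∈ Set.Icc (0:ℝ) 1, U₁ (N₁ x) y = U₂ (N₂ x) y) :
    (ContinuousOn (fun x => U₁ x e₂) (Set.Icc 0 1) ∧
      MonotoneOn (fun x => U₁ x e₂) (Set.Icc 0 1) ∧ U₁ 0 e₂ = 0 ∧ U₁ 1 e₂ = 1) := by
  obtain ⟨-, hr, -, -, -, hmono, -⟩ := hU₁
  obtain ⟨he, -, -, -, -, -, hn⟩ := hU₂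
  have key : ∀ x ∈ Set.Icc (0:ℝ) 1, U₁ (N₁ x) e₂ = N₂ x := fun x hx => by
    rw [heq x hx e₂ he, hn _ (hN₂.1 x hx)]
  have hm : MonotoneOn (fun x => U₁ x e₂) (Set.Icc 0 1) :=
    fun a ha b hb hab => hmono a ha b hb e₂ he hab
  refine ⟨cont_aux _ hm (fun x hx => hr x hx e₂ he) ?_, hm, ?_, ?_⟩
  · intro y hy
    obtain ⟨x, hx, rfl⟩ := neg_surj N₂ hN₂ hN₂c hy
    exact ⟨N₁ x, hN₁.1 x hx, key x hx⟩
  · have := key 1 (by simp)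
    rwa [hN₁.2.2.1, hN₂.2.2.1] at this
  · have := key 0 (by simp)
    rwa [hN₁.2.1, hN₂.2.1] at this

theorem stmt5 (N₁ N₂ : ℝ → ℝ) (hN₁ : IsFuzzyNegation N₁) (hN₂ : IsFuzzyNegation N₂)
    (hN₁c : ContinuousOn N₁ (Set.Icc 0 1)) (hN₂c : ContinuousOn N₂ (Set.Icc 0 1))
    (U₁ U₂ : ℝ → ℝ → ℝ) (e₁ e₂ : ℝ)
    (he₁ : e₁ ∈ Set.Ioo (0:ℝ) 1) (he₂ : e₂ ∈ Set.Ioo (0:ℝ) 1)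
    (hU₁ : IsUninorm U₁ e₁) (hU₂ : IsUninorm U₂ e₂)
    (hd₁ : U₁ 1 0 = 1) (hd₂ : U₂ 1 0 = 1)
    (heq : ∀ x ∈ Set.Icc (0:ℝ) 1, ∀ y ∈ Set.Icc (0:ℝ) 1, U₁ (N₁ x) y = U₂ (N₂ x) y)
    (hdiff : e₁ ≠ e₂ ∨ (∃ x ∈ Set.Icc (0:ℝ) 1, N₁ x ≠ N₂ x) ∨
      (∃ x ∈ Set.Icc (0:ℝ) 1, ∃ y ∈ Set.Icc (0:ℝ) 1, U₁ x y ≠ U₂ x y)) :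
    (e₁ ≠ e₂ ∧ (∃ x ∈ Set.Icc (0:ℝ) 1, N₁ x ≠ N₂ x) ∧
      (∃ x ∈ Set.Icc (0:ℝ) 1, ∃ y ∈ Set.Icc (0:ℝ) 1, U₁ x y ≠ U₂ x y)) ∧
    (ContinuousOn (fun x => U₁ x e₂) (Set.Icc 0 1) ∧
      MonotoneOn (fun x => U₁ x e₂) (Set.Icc 0 1) ∧ U₁ 0 e₂ = 0 ∧ U₁ 1 e₂ = 1) ∧
    (ContinuousOn (fun x => U₂ x e₁) (Set.Icc 0 1) ∧
      MonotoneOn (fun x => U₂ x e₁) (Set.Icc 0 1) ∧ U₂ 0 e₁ = 0 ∧ U₂ 1 e₁ = 1) := by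
  refine ⟨?_, half_aux N₁ N₂ hN₁ hN₂ hN₂c U₁ U₂ e₁ e₂ hU₁ hU₂ heq,
    half_aux N₂ N₁ hN₂ hN₁ hN₁c U₂ U₁ e₂ e₁ hU₂ hU₁ (fun x hx y hy => (heq x hx y hy).symm)⟩
  have he₁' := hU₁.1
  have he₂' := hU₂.1
  have hn₁ := hU₁.2.2.2.2.2.2
  have hn₂ := hU₂.2.2.2.2.2.2
  -- equal negations force equal uninorms
  have NU : (∀ x ∈ Set.Icc (0:ℝ) 1, N₁ x = N₂ x) →
      ∀ x ∈ Set.Icc (0:ℝ) 1, ∀ y ∈ Set.Icc (0:ℝ) 1, U₁ x y = U₂ x y := by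
    intro h x hx y hy
    obtain ⟨t, ht, rfl⟩ := neg_surj N₁ hN₁ hN₁c hx
    rw [heq t ht y hy, h t ht]
  -- equal uninorms force equal neutral elements
  have Ue : (∀ x ∈ Set.Icc (0:ℝ) 1, ∀ y ∈ Set.Icc (0:ℝ) 1, U₁ x y = U₂ x y) → e₁ = e₂ := by
    intro h
    rw [← hn₂ e₁ he₁', ← h e₁ he₁' e₂ he₂', hU₁.2.2.1 e₁ he₁' e₂ he₂', hn₁ e₂ he₂']
  -- equal neutral elements force equal negations
  have eN : e₁ = e₂ → ∀ x ∈ Set.Icc (0:ℝ) 1, N₁ x = N₂ x := by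
    intro h x hx
    have := heq x hx e₁ he₁'
    rwa [hn₁ _ (hN₁.1 x hx), h, hn₂ _ (hN₂.1 x hx)] at this
  have hne : e₁ ≠ e₂ := by
    intro h
    rcases hdiff with h' | ⟨x, hx, h'⟩ | ⟨x, hx, y, hy, h'⟩
    · exact h' h
    · exact h' (eN h x hx)
    · exact h' (NU (eN h) x hx y hy)
  refine ⟨hne, ?_, ?_⟩
  · by_contra! h
    exact hne (Ue (NU h))
  · by_contra! h
    exact hne (Ue h)
end

section
/- Let N : [0,1] → [0,1] be a continuous fuzzy negation and U : [0,1]² → [0,1] a disjunctive uninorm with neutral element e ∈ (0,1). Suppose there exist a continuous fuzzy negation N' and a disjunctive uninorm U' with neutral element e' ∈ (0,1) such that U'(N'(x), y) = U(N(x), y) for all x, y ∈ [0,1] and (N' ≠ N or U' ≠ U). Then there exists α ∈ (0,1) with α ≠ e such that the function s ↦ U(s, α) is continuous and increasing with U(0, α) = 0 and U(1, α) = 1. -/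
theorem stmt6 (N : ℝ → ℝ) (hN : IsFuzzyNegation N) (hNc : ContinuousOn N (Set.Icc 0 1))
    (U : ℝ → ℝ → ℝ) (e : ℝ) (he : e ∈ Set.Ioo (0:ℝ) 1)
    (hU : IsUninorm U e) (hd : U 1 0 = 1)
    (N' : ℝ → ℝ) (hN' : IsFuzzyNegation N') (hN'c : ContinuousOn N' (Set.Icc 0 1))
    (U' : ℝ → ℝ → ℝ) (e' : ℝ) (he' : e' ∈ Set.Ioo (0:ℝ) 1)
    (hU' : IsUninorm U' e') (hd' : U' 1 0 = 1)
    (heq : ∀ x ∈ Set.Icc (0:ℝ) 1, ∀ y ∈ Set.Icc (0:ℝ) 1, U' (N' x) y = U (N x) y)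
    (hdiff : (∃ x ∈ Set.Icc (0:ℝ) 1, N' x ≠ N x) ∨
      (∃ x ∈ Set.Icc (0:ℝ) 1, ∃ y ∈ Set.Icc (0:ℝ) 1, U' x y ≠ U x y)) :
    ∃ α ∈ Set.Ioo (0:ℝ) 1, α ≠ e ∧
      ContinuousOn (fun s => U s α) (Set.Icc 0 1) ∧
      MonotoneOn (fun s => U s α) (Set.Icc 0 1) ∧
      U 0 α = 0 ∧ U 1 α = 1 := by
  obtain ⟨-, hUm, -, -, -, hUl, hUe⟩ := hU
  obtain ⟨-, -, -, -, -, -, hUe'⟩ := hU'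
  obtain ⟨hNm, hN0, hN1, -⟩ := hN
  obtain ⟨hNm', hN0', hN1', -⟩ := hN'
  have h0 : (0:ℝ) ∈ Set.Icc (0:ℝ) 1 := by simp
  have h1 : (1:ℝ) ∈ Set.Icc (0:ℝ) 1 := by simp
  have hee' : e' ∈ Set.Icc (0:ℝ) 1 := ⟨he'.1.le, he'.2.le⟩
  have key : ∀ x ∈ Set.Icc (0:ℝ) 1, U (N x) e' = N' x := fun x hx => by
    rw [← heq x hx e' hee', hUe' _ (hNm' x hx)]
  have surj : ∀ y ∈ Set.Icc (0:ℝ) 1, ∃ x ∈ Set.Icc (0:ℝ) 1, N x = y := fun y hy => by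
    have := intermediate_value_Icc' (zero_le_one' ℝ) hNc
    rw [hN0, hN1] at this
    exact this hy
  have surj' : ∀ y ∈ Set.Icc (0:ℝ) 1, ∃ x ∈ Set.Icc (0:ℝ) 1, N' x = y := fun y hy => by
    have := intermediate_value_Icc' (zero_le_one' ℝ) hN'c
    rw [hN0', hN1'] at this
    exact this hy
  have hmono : MonotoneOn (fun s => U s e') (Set.Icc 0 1) :=
    fun a ha b hb hab => hUl a ha b hb e' hee' hab
  refine ⟨e', he', ?_, ?_, hmono, ?_, ?_⟩
  · rintro rfl
    have hNN : ∀ x ∈ Set.Icc (0:ℝ) 1, N' x = N x := fun x hx => by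
      rw [← key x hx, hUe _ (hNm x hx)]
    rcases hdiff with ⟨x, hx, h⟩ | ⟨x, hx, y, hy, h⟩
    · exact h (hNN x hx)
    · obtain ⟨z, hz, rfl⟩ := surj x hx
      apply h
      rw [← heq z hz y hy, hNN z hz]
  · let f : Set.Icc (0:ℝ) 1 → Set.Icc (0:ℝ) 1 := fun s => ⟨U s e', hUm s s.2 e' hee'⟩
    have fm : Monotone f := fun a b hab => hmono a.2 b.2 hab
    have fs : Function.Surjective f := by
      rintro ⟨y, hy⟩
      obtain ⟨x, hx, rfl⟩ := surj' y hy
      exact ⟨⟨N x, hNm x hx⟩, Subtype.ext (key x hx)⟩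
    have fc : Continuous f := fm.continuous_of_surjective fs
    rw [continuousOn_iff_continuous_restrict]
    exact continuous_subtype_val.comp fc
  · have := key 1 h1
    rwa [hN1, hN1'] at this
  · have := key 0 h0
    rwa [hN0, hN0'] at this
end

section
/- Let N : [0,1] → [0,1] be a continuous fuzzy negation, U : [0,1]² → [0,1] a disjunctive uninorm with neutral element e ∈ (0,1), and I(x,y) = U(N(x), y). Suppose there exists α ∈ (0,1) with α ≠ e such that s ↦ U(s, α) is continuous and increasing with U(0, α) = 0 and U(1, α) = 1. Define N^α(x) = I(x, α) for x ∈ [0,1]. Then N^α is a continuous fuzzy negation, and the function U* : [0,1]² → [0,1] defined by U*(x,y) = I(ℜ_{N^α}(x), y) satisfies U*(N^α(x), y) = I(x, y) for all x, y ∈ [0,1]. -/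
open Classical in
/-- The modified pseudo-inverse `ℜ_M` of a fuzzy negation `M`:
`ℜ_M 0 = 1` and `ℜ_M x = sup {y ∈ [0,1] | M y > x}` for `x ∈ (0,1]`. -/
noncomputable def pseudoInv (M : ℝ → ℝ) : ℝ → ℝ := fun x =>
  if x = 0 then 1 else sSup {y | y ∈ Set.Icc (0:ℝ) 1 ∧ M y > x}

theorem stmt7 (N : ℝ → ℝ) (hN : IsFuzzyNegation N) (hNc : ContinuousOn N (Set.Icc 0 1))
    (U : ℝ → ℝ → ℝ) (e : ℝ) (he : e ∈ Set.Ioo (0:ℝ) 1)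
    (hU : IsUninorm U e) (hd : U 1 0 = 1)
    (α : ℝ) (hα : α ∈ Set.Ioo (0:ℝ) 1) (hαe : α ≠ e)
    (hcutc : ContinuousOn (fun s => U s α) (Set.Icc 0 1))
    (hcutm : MonotoneOn (fun s => U s α) (Set.Icc 0 1))
    (h0 : U 0 α = 0) (h1 : U 1 α = 1) :
    IsFuzzyNegation (fun x => U (N x) α) ∧
    ContinuousOn (fun x => U (N x) α) (Set.Icc 0 1) ∧
    (∀ x ∈ Set.Icc (0:ℝ) 1, ∀ y ∈ Set.Icc (0:ℝ) 1,
      U (N (pseudoInv (fun s => U (N s) α) (U (N x) α))) y = U (N x) y) := by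
  obtain ⟨hN1, hN0', hN1', hNm⟩ := hN
  obtain ⟨heI, hUI, hUc, hUa, hUm2, hUm1, hUe⟩ := hU
  have hαI : α ∈ Set.Icc (0:ℝ) 1 := ⟨hα.1.le, hα.2.le⟩
  have z01 : (0:ℝ) ∈ Set.Icc (0:ℝ) 1 := by simp
  have o01 : (1:ℝ) ∈ Set.Icc (0:ℝ) 1 := by simp
  have hMneg : IsFuzzyNegation (fun x => U (N x) α) := by
    refine ⟨fun x hx => hUI _ (hN1 x hx) _ hαI, ?_, ?_, ?_⟩
    · simp only [hN0', h1]
    · simp only [hN1', h0]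
    · intro x hx y hy hxy
      exact hUm1 _ (hN1 y hy) _ (hN1 x hx) _ hαI (hNm x hx y hy hxy)
  have hMc : ContinuousOn (fun x => U (N x) α) (Set.Icc 0 1) :=
    hcutc.comp hNc (fun x hx => hN1 x hx)
  refine ⟨hMneg, hMc, ?_⟩
  -- `α` is invertible
  obtain ⟨β, hβ, hβe⟩ : ∃ β ∈ Set.Icc (0:ℝ) 1, U β α = e := by
    have h := intermediate_value_Icc (zero_le_one' ℝ) hcutc
    simp only [h0, h1] at h
    exact h heI
  have hinv : ∀ s ∈ Set.Icc (0:ℝ) 1, U (U s α) β = s := by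
    intro s hs
    rw [hUa s hs α hαI β hβ, hUc α hαI β hβ, hβe, hUe s hs]
  intro x hx y hy
  generalize hM : (fun x => U (N x) α) = M at *
  have hMx : ∀ t, U (N t) α = M t := fun t => by rw [← hM]
  obtain ⟨hMI, hM0, hM1, hMm⟩ := hMneg
  rw [hMx]
  have key : ∃ r, pseudoInv M (M x) = r ∧ r ∈ Set.Icc (0:ℝ) 1 ∧ M r = M x := by
    refine ⟨_, rfl, ?_⟩
    unfold pseudoInv
    split_ifs with hc
    · exact ⟨o01, by rw [hM1, hc]⟩
    · set S := {y | y ∈ Set.Icc (0:ℝ) 1 ∧ M y > M x} with hS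
      have hub : ∀ t ∈ S, t ≤ x := by
        rintro t ⟨ht, htx⟩
        by_contra hlt
        exact absurd (hMm x hx t ht (not_le.mp hlt).le) (not_le.mpr htx)
      have hr0 : 0 ≤ sSup S := Real.sSup_nonneg (fun t ht => ht.1.1)
      have hrx : sSup S ≤ x := Real.sSup_le hub hx.1
      have hrI : sSup S ∈ Set.Icc (0:ℝ) 1 := ⟨hr0, hrx.trans hx.2⟩
      refine ⟨hrI, ?_⟩
      have hge := hMm _ hrI x hx hrx
      by_contra hne
      have hgt : M x < M (sSup S) := lt_of_le_of_ne hge (Ne.symm hne)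
      have hiv := intermediate_value_Icc' hrx (hMc.mono (Set.Icc_subset_Icc hr0 hx.2))
      obtain ⟨t, ht, hMt⟩ := hiv (show (M x + M (sSup S)) / 2 ∈ _ from
        ⟨by linarith, by linarith⟩)
      have htS : t ∈ S := ⟨⟨hr0.trans ht.1, ht.2.trans hx.2⟩, by
        show M x < M t
        linarith⟩
      have hle : t ≤ sSup S := le_csSup ⟨x, hub⟩ htS
      have : t = sSup S := le_antisymm hle ht.1
      rw [this] at hMt
      linarith
  obtain ⟨r, hr, hrI, hMr⟩ := key
  rw [hr]
  have : N r = N x := by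
    rw [← hinv _ (hN1 r hrI), ← hinv _ (hN1 x hx), hMx, hMx, hMr]
  rw [this]
end

section
/- Let N : [0,1] → [0,1] be a continuous fuzzy negation, U : [0,1]² → [0,1] a disjunctive uninorm with neutral element e ∈ (0,1), and I(x,y) = U(N(x), y). Suppose N* is a continuous fuzzy negation and U* is a disjunctive uninorm with neutral element α ∈ (0,1) such that I(x,y) = U*(N*(x), y) for all x, y ∈ [0,1]. Then N*(x) = I(x, α) for all x ∈ [0,1], the function s ↦ I(s, α) is a continuous fuzzy negation, and U*(x,y) = I(ℜ_{N*}(x), y) for all x, y ∈ [0,1]. -/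
theorem pseudoInv_spec (M : ℝ → ℝ) (hM : IsFuzzyNegation M)
    (hc : ContinuousOn M (Set.Icc 0 1)) (x : ℝ) (hx : x ∈ Set.Icc (0:ℝ) 1) :
    pseudoInv M x ∈ Set.Icc (0:ℝ) 1 ∧ M (pseudoInv M x) = x := by
  obtain ⟨hr, h0, h1, hm⟩ := hM
  by_cases hx0 : x = 0
  · subst hx0
    simp [pseudoInv, h1]
  have hp : pseudoInv M x = sSup {y | y ∈ Set.Icc (0:ℝ) 1 ∧ M y > x} := by
    simp [pseudoInv, hx0]
  obtain ⟨c, hcI, hcx⟩ : x ∈ M '' Set.Icc 0 1 := by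
    apply intermediate_value_Icc' zero_le_one hc
    rw [h0, h1]
    exact hx
  rw [hp]
  set S := {y | y ∈ Set.Icc (0:ℝ) 1 ∧ M y > x} with hS
  have hub : ∀ y ∈ S, y ≤ c := by
    intro y hy
    by_contra hlt
    have h2 := hm c hcI y hy.1 (not_le.mp hlt).le
    have h3 := hy.2
    linarith
  have hn : 0 ≤ sSup S := Real.sSup_nonneg (fun y hy => hy.1.1)
  have hle : sSup S ≤ c := Real.sSup_le hub hcI.1
  have hI : sSup S ∈ Set.Icc (0:ℝ) 1 := ⟨hn, hle.trans hcI.2⟩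
  refine ⟨hI, le_antisymm ?_ ?_⟩
  · by_contra hlt
    have hlt := not_le.mp hlt
    obtain ⟨d, hd, hdx⟩ : (M (sSup S) + x) / 2 ∈ M '' Set.Icc (sSup S) c := by
      apply intermediate_value_Icc' hle (hc.mono (Set.Icc_subset_Icc hn hcI.2))
      rw [hcx]
      constructor <;> linarith
    have hdS : d ∈ S := ⟨⟨hn.trans hd.1, hd.2.trans hcI.2⟩, by
      show x < M d
      linarith⟩
    have hde : d = sSup S := le_antisymm (le_csSup ⟨c, hub⟩ hdS) hd.1
    rw [← hde] at hdx hlt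
    linarith
  · have := hm _ hI c hcI hle
    linarith

theorem stmt8 (N : ℝ → ℝ) (hN : IsFuzzyNegation N) (hNc : ContinuousOn N (Set.Icc 0 1))
    (U : ℝ → ℝ → ℝ) (e : ℝ) (he : e ∈ Set.Ioo (0:ℝ) 1)
    (hU : IsUninorm U e) (hd : U 1 0 = 1)
    (Nstar : ℝ → ℝ) (hNs : IsFuzzyNegation Nstar) (hNsc : ContinuousOn Nstar (Set.Icc 0 1))
    (Ustar : ℝ → ℝ → ℝ) (α : ℝ) (hα : α ∈ Set.Ioo (0:ℝ) 1)
    (hUs : IsUninorm Ustar α) (hds : Ustar 1 0 = 1)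
    (heq : ∀ x ∈ Set.Icc (0:ℝ) 1, ∀ y ∈ Set.Icc (0:ℝ) 1, U (N x) y = Ustar (Nstar x) y) :
    (∀ x ∈ Set.Icc (0:ℝ) 1, Nstar x = U (N x) α) ∧
    IsFuzzyNegation (fun s => U (N s) α) ∧
    ContinuousOn (fun s => U (N s) α) (Set.Icc 0 1) ∧
    (∀ x ∈ Set.Icc (0:ℝ) 1, ∀ y ∈ Set.Icc (0:ℝ) 1,
      Ustar x y = U (N (pseudoInv Nstar x)) y) := by
  have key : ∀ x ∈ Set.Icc (0:ℝ) 1, U (N x) α = Nstar x := fun x hx => by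
    rw [heq x hx α ⟨hα.1.le, hα.2.le⟩]
    exact hUs.2.2.2.2.2.2 _ (hNs.1 x hx)
  refine ⟨fun x hx => (key x hx).symm, ⟨?_, ?_, ?_, ?_⟩, hNsc.congr key, ?_⟩
  · intro x hx
    simp only [key x hx]
    exact hNs.1 x hx
  · simp only [key 0 (by simp), hNs.2.1]
  · simp only [key 1 (by simp), hNs.2.2.1]
  · intro x hx y hy hxy
    simp only [key x hx, key y hy]
    exact hNs.2.2.2 x hx y hy hxy
  · intro x hx y hy
    obtain ⟨h1, h2⟩ := pseudoInv_spec Nstar hNs hNsc x hx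
    rw [heq _ h1 y hy, h2]
end

section
/- Let U : [0,1]² → [0,1] be a uninorm with neutral element e ∈ [0,1], and suppose x, z ∈ [0,1] satisfy U(z, x) = e. Then U(U(v, z), x) = v for every v ∈ [0,1]; consequently the function s ↦ U(s, x) is surjective onto [0,1], and being increasing and surjective it is continuous. -/
theorem stmt9 (U : ℝ → ℝ → ℝ) (e : ℝ) (he : e ∈ Set.Icc (0:ℝ) 1)
    (hU : IsUninorm U e)
    (x z : ℝ) (hx : x ∈ Set.Icc (0:ℝ) 1) (hz : z ∈ Set.Icc (0:ℝ) 1)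
    (hzx : U z x = e) :
    (∀ v ∈ Set.Icc (0:ℝ) 1, U (U v z) x = v) ∧
    (∀ w ∈ Set.Icc (0:ℝ) 1, ∃ s ∈ Set.Icc (0:ℝ) 1, U s x = w) ∧
    ContinuousOn (fun s => U s x) (Set.Icc 0 1) := by
  obtain ⟨_, hmem, _, hassoc, _, hmono, hne⟩ := hU
  have h1 : ∀ v ∈ Set.Icc (0:ℝ) 1, U (U v z) x = v := by
    intro v hv
    rw [hassoc v hv z hz x hx, hzx, hne v hv]
  refine ⟨h1, fun w hw => ⟨U w z, hmem w hw z hz, h1 w hw⟩, ?_⟩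
  let f : Set.Icc (0:ℝ) 1 → Set.Icc (0:ℝ) 1 := fun s => ⟨U s x, hmem s s.2 x hx⟩
  have hf : Continuous f := by
    apply Monotone.continuous_of_surjective
    · intro a b hab
      exact hmono a a.2 b b.2 x hx hab
    · intro w
      exact ⟨⟨U w z, hmem w w.2 z hz⟩, Subtype.ext (h1 w w.2)⟩
  rw [continuousOn_iff_continuous_restrict]
  exact continuous_subtype_val.comp hf
end

section
/- Let U : [0,1]² → [0,1] be a disjunctive uninorm with neutral element e ∈ (0,1) and let x ∈ (0,1), x ≠ e, be such that the function s ↦ U(x, s) is continuous with range [0,1]. Then: (i) there exists y ∈ (0,1) with U(x, y) = e, and if x < e then y > e while if x > e then y < e; (ii) the function s ↦ U(x, s) is strictly increasing; (iii) the function s ↦ U(y, s) is continuous, strictly increasing, and has range [0,1]. -/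
theorem stmt10 (U : ℝ → ℝ → ℝ) (e : ℝ) (he : e ∈ Set.Ioo (0:ℝ) 1)
    (hU : IsUninorm U e) (hd : U 1 0 = 1)
    (x : ℝ) (hx : x ∈ Set.Ioo (0:ℝ) 1) (hxe : x ≠ e)
    (hcutc : ContinuousOn (fun s => U x s) (Set.Icc 0 1))
    (hcutr : (fun s => U x s) '' Set.Icc 0 1 = Set.Icc 0 1) :
    StrictMonoOn (fun s => U x s) (Set.Icc 0 1) ∧
    ∃ y ∈ Set.Ioo (0:ℝ) 1, U x y = e ∧ (x < e → e < y) ∧ (e < x → y < e) ∧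
      ContinuousOn (fun s => U y s) (Set.Icc 0 1) ∧
      StrictMonoOn (fun s => U y s) (Set.Icc 0 1) ∧
      (fun s => U y s) '' Set.Icc 0 1 = Set.Icc 0 1 := by
  obtain ⟨heI, hm, hc, ha, hmono, -, hn⟩ := hU
  have hxI : x ∈ Set.Icc (0:ℝ) 1 := ⟨hx.1.le, hx.2.le⟩
  have h0I : (0:ℝ) ∈ Set.Icc (0:ℝ) 1 := by simp
  have h1I : (1:ℝ) ∈ Set.Icc (0:ℝ) 1 := by simp
  have hsurj : ∀ t ∈ Set.Icc (0:ℝ) 1, ∃ s ∈ Set.Icc (0:ℝ) 1, U x s = t := by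
    intro t ht
    rw [← hcutr] at ht
    exact ht
  have hx0 : U x 0 = 0 := by
    obtain ⟨s, hs, h⟩ := hsurj 0 h0I
    have h1 := hmono x hxI 0 h0I s hs hs.1
    have h2 := (hm x hxI 0 h0I).1
    linarith
  have hx1 : U x 1 = 1 := by
    obtain ⟨s, hs, h⟩ := hsurj 1 h1I
    have h1 := hmono x hxI s hs 1 h1I hs.2
    have h2 := (hm x hxI 1 h1I).2
    linarith
  obtain ⟨y, hyI, hy⟩ := hsurj e heI
  have hen : ∀ s ∈ Set.Icc (0:ℝ) 1, U e s = s := fun s hs => by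
    rw [hc e heI s hs, hn s hs]
  have hyx : ∀ s ∈ Set.Icc (0:ℝ) 1, U y (U x s) = s := fun s hs => by
    rw [← ha y hyI x hxI s hs, hc y hyI x hxI, hy, hen s hs]
  have hxy : ∀ s ∈ Set.Icc (0:ℝ) 1, U x (U y s) = s := fun s hs => by
    rw [← ha x hxI y hyI s hs, hy, hen s hs]
  have hsx : StrictMonoOn (fun s => U x s) (Set.Icc 0 1) := by
    intro a ha' b hb hab
    refine lt_of_le_of_ne (hmono x hxI a ha' b hb hab.le) fun h => hab.ne ?_
    have h' : U x a = U x b := h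
    rw [← hyx a ha', ← hyx b hb, h']
  have hsy : StrictMonoOn (fun s => U y s) (Set.Icc 0 1) := by
    intro a ha' b hb hab
    refine lt_of_le_of_ne (hmono y hyI a ha' b hb hab.le) fun h => hab.ne ?_
    have h' : U y a = U y b := h
    rw [← hxy a ha', ← hxy b hb, h']
  refine ⟨hsx, y, ⟨lt_of_le_of_ne hyI.1 ?_, lt_of_le_of_ne hyI.2 ?_⟩, hy, ?_, ?_, ?_, hsy, ?_⟩
  · rintro rfl
    linarith [he.1]
  · rintro rfl
    linarith [he.2]
  · intro h
    by_contra! hle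
    have := hmono x hxI y hyI e heI hle
    rw [hn x hxI] at this
    linarith
  · intro h
    by_contra! hle
    have := hmono x hxI e heI y hyI hle
    rw [hn x hxI] at this
    linarith
  · rw [continuousOn_iff_continuous_restrict]
    let f : Set.Icc (0:ℝ) 1 → Set.Icc (0:ℝ) 1 := fun s => ⟨U y s, hm y hyI s s.2⟩
    have hf : Monotone f := fun a b hab => hmono y hyI a a.2 b b.2 hab
    have hfs : Function.Surjective f := fun t =>
      ⟨⟨U x t, hm x hxI t t.2⟩, Subtype.ext (hyx t t.2)⟩
    exact continuous_subtype_val.comp (hf.continuous_of_surjective hfs)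
  · apply Set.Subset.antisymm
    · rintro _ ⟨s, hs, rfl⟩
      exact hm y hyI s hs
    · intro t ht
      exact ⟨U x t, hm x hxI t ht, hyx t ht⟩
end

section
/- Let U : [0,1]² → [0,1] be a disjunctive uninorm with neutral element e ∈ (0,1) and let x ∈ (0,1), x < e, be such that s ↦ U(x, s) is continuous with range [0,1]; let y > e satisfy U(x, y) = e. Define x_U^(0) = e, x_U^(n) = U(x, x_U^(n−1)) and x_U^(−n) = U(y, x_U^(−n+1)) for n ≥ 1, set a = lim_{n→∞} x_U^(n), d = lim_{n→∞} x_U^(−n), and f^(n)(s) = U(x_U^(n), s) for n ∈ ℤ (so f^(0) = id). Then: (i) for every s ∈ (a, d) there is exactly one n ∈ ℤ with s ∈ (x_U^(n+1), x_U^(n)]; (ii) if s ∈ (x_U^(n+1), x_U^(n)] then f^(m)(s) ∈ (x_U^(n+m+1), x_U^(n+m)] for all m ∈ ℤ; (iii) if s ∈ (x_U^(n+1), x_U^(n)] and t ∈ (x_U^(m+1), x_U^(m)] then f^(−n)(s), f^(−m)(t) ∈ (x, e] and U(s, t) = f^(n+m)( U( f^(−n)(s), f^(−m)(t) ) ); in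 particular U restricted to (a,d)² is completely determined by the cut s ↦ U(x,s) and the restriction of U to [x,e]². -/
theorem stmt12 (U : ℝ → ℝ → ℝ) (e : ℝ) (he : e ∈ Set.Ioo (0:ℝ) 1)
    (hU : IsUninorm U e) (hdisj : U 1 0 = 1)
    (x : ℝ) (hx : x ∈ Set.Ioo (0:ℝ) 1) (hxe : x < e)
    (hcutc : ContinuousOn (fun s => U x s) (Set.Icc 0 1))
    (hcutr : (fun s => U x s) '' Set.Icc 0 1 = Set.Icc 0 1)
    (y : ℝ) (hy : y ∈ Set.Icc (0:ℝ) 1) (hye : e < y) (hxy : U x y = e)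
    (xs : ℤ → ℝ) (hxs0 : xs 0 = e)
    (hxsp : ∀ n : ℕ, xs ((n : ℤ) + 1) = U x (xs (n : ℤ)))
    (hxsn : ∀ n : ℕ, xs (-(n : ℤ) - 1) = U y (xs (-(n : ℤ))))
    (a d : ℝ)
    (ha : Filter.Tendsto (fun n : ℕ => xs (n : ℤ)) Filter.atTop (nhds a))
    (hd : Filter.Tendsto (fun n : ℕ => xs (-(n : ℤ))) Filter.atTop (nhds d)) :
    (∀ s ∈ Set.Ioo a d, ∃! n : ℤ, s ∈ Set.Ioc (xs (n + 1)) (xs n)) ∧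
    (∀ n m : ℤ, ∀ s ∈ Set.Ioc (xs (n + 1)) (xs n),
      U (xs m) s ∈ Set.Ioc (xs (n + m + 1)) (xs (n + m))) ∧
    (∀ n m : ℤ, ∀ s ∈ Set.Ioc (xs (n + 1)) (xs n), ∀ t ∈ Set.Ioc (xs (m + 1)) (xs m),
      U (xs (-n)) s ∈ Set.Ioc x e ∧ U (xs (-m)) t ∈ Set.Ioc x e ∧
      U s t = U (xs (n + m)) (U (U (xs (-n)) s) (U (xs (-m)) t))) := by
  obtain ⟨heI, hcl, hcomm, hassoc, hmono, -, hneu⟩ := hU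
  have hxI : x ∈ Set.Icc (0:ℝ) 1 := ⟨hx.1.le, hx.2.le⟩
  have hneu' : ∀ z ∈ Set.Icc (0:ℝ) 1, U e z = z := fun z hz => by
    rw [hcomm e heI z hz, hneu z hz]
  have hyx : U y x = e := by rw [hcomm y hy x hxI, hxy]
  have hp : ∀ n : ℕ, xs (n : ℤ) ∈ Set.Icc (0:ℝ) 1 := by
    intro n
    induction n with
    | zero => simpa [hxs0] using heI
    | succ k ih =>
      push_cast
      rw [hxsp k]
      exact hcl x hxI _ ih
  have hn : ∀ n : ℕ, xs (-(n : ℤ)) ∈ Set.Icc (0:ℝ) 1 := by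
    intro n
    induction n with
    | zero => simpa [hxs0] using heI
    | succ k ih =>
      have h : (-((k + 1 : ℕ) : ℤ)) = -(k : ℤ) - 1 := by push_cast; ring
      rw [h, hxsn k]
      exact hcl y hy _ ih
  have hI : ∀ n : ℤ, xs n ∈ Set.Icc (0:ℝ) 1 := by
    intro n
    obtain ⟨k, rfl | rfl⟩ := Int.eq_nat_or_neg n
    · exact hp k
    · exact hn k
  have hsucc : ∀ n : ℤ, xs (n + 1) = U x (xs n) := by
    intro n
    obtain ⟨k, rfl | rfl⟩ := Int.eq_nat_or_neg n
    · exact hxsp k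
    · cases k with
      | zero => simpa using hxsp 0
      | succ j =>
        have h1 : (-((j + 1 : ℕ) : ℤ)) = -(j : ℤ) - 1 := by push_cast; ring
        rw [h1, sub_add_cancel, hxsn j, ← hassoc x hxI y hy _ (hn j), hxy, hneu' _ (hn j)]
  have hpred : ∀ n : ℤ, xs (n - 1) = U y (xs n) := by
    intro n
    have h := hsucc (n - 1)
    rw [sub_add_cancel] at h
    rw [h, ← hassoc y hy x hxI _ (hI _), hyx, hneu' _ (hI _)]
  have hadd : ∀ m n : ℤ, U (xs m) (xs n) = xs (m + n) := by
    intro m n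
    induction m using Int.induction_on with
    | zero => rw [hxs0, hneu' _ (hI n), zero_add]
    | succ k ih =>
      rw [hsucc, hassoc x hxI _ (hI _) _ (hI n), ih, ← hsucc]
      congr 1; ring
    | pred k ih =>
      rw [hpred, hassoc y hy _ (hI _) _ (hI n), ih, ← hpred]
      congr 1; ring
  have hinv : ∀ m : ℤ, ∀ s ∈ Set.Icc (0:ℝ) 1, U (xs m) (U (xs (-m)) s) = s := by
    intro m s hs
    rw [← hassoc _ (hI _) _ (hI _) s hs, hadd, add_neg_cancel, hxs0, hneu' s hs]
  have hstrict : ∀ m : ℤ, ∀ s ∈ Set.Icc (0:ℝ) 1, ∀ t ∈ Set.Icc (0:ℝ) 1, s < t →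
      U (xs m) s < U (xs m) t := by
    intro m s hs t ht hst
    refine lt_of_le_of_ne (hmono _ (hI m) s hs t ht hst.le) fun h => ?_
    have h1 := hinv (-m) s hs
    rw [neg_neg, h] at h1
    have h2 := hinv (-m) t ht
    rw [neg_neg] at h2
    exact hst.ne (h1.symm.trans h2)
  have hx1 : xs 1 = x := by
    have h := hsucc 0
    rwa [zero_add, hxs0, hneu x hxI] at h
  have hanti : StrictAnti xs := by
    refine strictAnti_int_of_succ_lt fun n => ?_
    have h := hstrict n x hxI e heI hxe
    rwa [← hx1, ← hxs0, hadd, hadd, add_zero] at h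
  have hii : ∀ n m : ℤ, ∀ s ∈ Set.Ioc (xs (n + 1)) (xs n),
      U (xs m) s ∈ Set.Ioc (xs (n + m + 1)) (xs (n + m)) := by
    intro n m s hs
    have hsI : s ∈ Set.Icc (0:ℝ) 1 := ⟨(hI _).1.trans hs.1.le, hs.2.trans (hI _).2⟩
    have h1 := hstrict m _ (hI (n + 1)) s hsI hs.1
    have h2 := hmono _ (hI m) s hsI _ (hI n) hs.2
    rw [hadd] at h1 h2
    rw [show n + m + 1 = m + (n + 1) by ring, show n + m = m + n by ring]
    exact ⟨h1, h2⟩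
  have hcancel : ∀ n : ℤ, ∀ s ∈ Set.Ioc (xs (n + 1)) (xs n), U (xs (-n)) s ∈ Set.Ioc x e := by
    intro n s hs
    have h := hii n (-n) s hs
    rwa [add_neg_cancel, zero_add, hx1, hxs0] at h
  refine ⟨?_, hii, ?_⟩
  · intro s hs
    obtain ⟨N, hN⟩ := (ha.eventually_lt_const hs.1).exists
    obtain ⟨M, hM⟩ := (hd.eventually_const_lt hs.2).exists
    obtain ⟨n, hn1, hn2⟩ := Int.exists_greatest_of_bdd (P := fun n => s ≤ xs n)
      ⟨N, fun z hz => (hanti.lt_iff_gt.mp (hN.trans_le hz)).le⟩ ⟨_, hM.le⟩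
    refine ⟨n, ⟨?_, hn1⟩, ?_⟩
    · by_contra h
      have := hn2 (n + 1) (not_lt.mp h)
      omega
    · intro k hk
      have h1 := hn2 k hk.2
      have h2 : n < k + 1 := hanti.lt_iff_gt.mp (hk.1.trans_le hn1)
      omega
  · intro n m s hs t ht
    refine ⟨hcancel n s hs, hcancel m t ht, ?_⟩
    have hsI : s ∈ Set.Icc (0:ℝ) 1 := ⟨(hI _).1.trans hs.1.le, hs.2.trans (hI _).2⟩
    have htI : t ∈ Set.Icc (0:ℝ) 1 := ⟨(hI _).1.trans ht.1.le, ht.2.trans (hI _).2⟩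
    have hP := hcl _ (hI (-n)) s hsI
    have hQ := hcl _ (hI (-m)) t htI
    rw [← hadd, hassoc _ (hI n) _ (hI m) _ (hcl _ hP _ hQ), ← hassoc _ (hI m) _ hP _ hQ,
      hcomm _ (hI m) _ hP, hassoc _ hP _ (hI m) _ hQ, hinv m t htI,
      ← hassoc _ (hI n) _ hP _ htI, hinv n s hsI]
end

section
/- Let U : [0,1]² → [0,1] be a disjunctive uninorm with neutral element e ∈ (0,1) and let x ∈ (0,1), x < e, be such that s ↦ U(x, s) is continuous with range [0,1]; let y > e satisfy U(x, y) = e. Define f(s) = U(x, s), x_U^(0) = e, x_U^(n) = U(x, x_U^(n−1)) and x_U^(−n) = U(y, x_U^(−n+1)) for n ≥ 1, a_x = lim_{n→∞} x_U^(n) and d_x = lim_{n→∞} x_U^(−n). Then: (i) f(s) ≠ s for all s ∈ (a_x, d_x); (ii) if f(s) = s for some s ∈ [0,1], then U(s, t) ∉ (a_x, d_x) for all t ∈ [0,1]. -/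
theorem stmt13 (U : ℝ → ℝ → ℝ) (e : ℝ) (he : e ∈ Set.Ioo (0:ℝ) 1)
    (hU : IsUninorm U e) (hdisj : U 1 0 = 1)
    (x : ℝ) (hx : x ∈ Set.Ioo (0:ℝ) 1) (hxe : x < e)
    (hcutc : ContinuousOn (fun s => U x s) (Set.Icc 0 1))
    (hcutr : (fun s => U x s) '' Set.Icc 0 1 = Set.Icc 0 1)
    (y : ℝ) (hy : y ∈ Set.Icc (0:ℝ) 1) (hye : e < y) (hxy : U x y = e)
    (xs : ℤ → ℝ) (hxs0 : xs 0 = e)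
    (hxsp : ∀ n : ℕ, xs ((n : ℤ) + 1) = U x (xs (n : ℤ)))
    (hxsn : ∀ n : ℕ, xs (-(n : ℤ) - 1) = U y (xs (-(n : ℤ))))
    (ax dx : ℝ)
    (ha : Filter.Tendsto (fun n : ℕ => xs (n : ℤ)) Filter.atTop (nhds ax))
    (hd : Filter.Tendsto (fun n : ℕ => xs (-(n : ℤ))) Filter.atTop (nhds dx)) :
    (∀ s ∈ Set.Ioo ax dx, U x s ≠ s) ∧
    (∀ s ∈ Set.Icc (0:ℝ) 1, U x s = s →
      ∀ t ∈ Set.Icc (0:ℝ) 1, U s t ∉ Set.Ioo ax dx) := by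
  obtain ⟨heI, hmem, hcomm, hassoc, hmono, -, hneu⟩ := hU
  have hxI : x ∈ Set.Icc (0:ℝ) 1 := ⟨hx.1.le, hx.2.le⟩
  have hp : ∀ n : ℕ, xs (n : ℤ) ∈ Set.Icc (0:ℝ) 1 := by
    intro n
    induction n with
    | zero => simpa [hxs0] using heI
    | succ k ih =>
      have h := hxsp k
      push_cast
      rw [h]
      exact hmem _ hxI _ ih
  have hsn : ∀ k : ℕ, xs (-((k + 1 : ℕ) : ℤ)) = U y (xs (-(k : ℤ))) := by
    intro k
    rw [← hxsn k]
    congr 1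
    push_cast
    ring
  have hn : ∀ n : ℕ, xs (-(n : ℤ)) ∈ Set.Icc (0:ℝ) 1 := by
    intro n
    induction n with
    | zero => simpa [hxs0] using heI
    | succ k ih =>
      rw [hsn k]
      exact hmem _ hy _ ih
  have haI : ax ∈ Set.Icc (0:ℝ) 1 :=
    isClosed_Icc.mem_of_tendsto ha (Filter.Eventually.of_forall hp)
  have hdI : dx ∈ Set.Icc (0:ℝ) 1 :=
    isClosed_Icc.mem_of_tendsto hd (Filter.Eventually.of_forall hn)
  have key : ∀ s ∈ Set.Ioo ax dx, U x s ≠ s := by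
    intro s hs hfix
    have hsI : s ∈ Set.Icc (0:ℝ) 1 := ⟨haI.1.trans hs.1.le, hs.2.le.trans hdI.2⟩
    have hyfix : U y s = s := by
      calc U y s = U y (U x s) := by rw [hfix]
        _ = U (U y x) s := (hassoc y hy x hxI s hsI).symm
        _ = U e s := by rw [hcomm y hy x hxI, hxy]
        _ = s := by rw [hcomm e heI s hsI, hneu s hsI]
    rcases le_total s e with hse | hse
    · have hle : ∀ n : ℕ, s ≤ xs (n : ℤ) := by
        intro n
        induction n with
        | zero => simpa [hxs0] using hse
        | succ k ih =>
          have h := hxsp k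
          push_cast
          rw [h]
          calc s = U x s := hfix.symm
            _ ≤ _ := hmono x hxI s hsI _ (hp k) ih
      exact absurd (ge_of_tendsto' ha hle) (not_le.mpr hs.1)
    · have hle : ∀ n : ℕ, xs (-(n : ℤ)) ≤ s := by
        intro n
        induction n with
        | zero => simpa [hxs0] using hse
        | succ k ih =>
          rw [hsn k]
          calc _ ≤ U y s := hmono y hy _ (hn k) s hsI ih
            _ = s := hyfix
      exact absurd (le_of_tendsto' hd hle) (not_le.mpr hs.2)
  refine ⟨key, ?_⟩
  intro s hs hfix t ht hmem'
  apply key _ hmem'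
  rw [← hassoc x hxI s hs t ht, hfix]
end

section
/- Let U : [0,1]² → [0,1] be a disjunctive uninorm with neutral element e ∈ (0,1) and let x ∈ (0,1), x < e, be such that s ↦ U(x, s) is continuous with range [0,1]; let y > e satisfy U(x, y) = e. Define f(s) = U(x, s), x_U^(0) = e, x_U^(n) = U(x, x_U^(n−1)) and x_U^(−n) = U(y, x_U^(−n+1)) for n ≥ 1, a_x = lim_{n→∞} x_U^(n) and d_x = lim_{n→∞} x_U^(−n). Then f(a_x) = a_x, f(d_x) = d_x, and U(a_x, d_x) ∈ {a_x, d_x}. -/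
theorem stmt14 (U : ℝ → ℝ → ℝ) (e : ℝ) (he : e ∈ Set.Ioo (0:ℝ) 1)
    (hU : IsUninorm U e) (hdisj : U 1 0 = 1)
    (x : ℝ) (hx : x ∈ Set.Ioo (0:ℝ) 1) (hxe : x < e)
    (hcutc : ContinuousOn (fun s => U x s) (Set.Icc 0 1))
    (hcutr : (fun s => U x s) '' Set.Icc 0 1 = Set.Icc 0 1)
    (y : ℝ) (hy : y ∈ Set.Icc (0:ℝ) 1) (hye : e < y) (hxy : U x y = e)
    (xs : ℤ → ℝ) (hxs0 : xs 0 = e)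
    (hxsp : ∀ n : ℕ, xs ((n : ℤ) + 1) = U x (xs (n : ℤ)))
    (hxsn : ∀ n : ℕ, xs (-(n : ℤ) - 1) = U y (xs (-(n : ℤ))))
    (ax dx : ℝ)
    (ha : Filter.Tendsto (fun n : ℕ => xs (n : ℤ)) Filter.atTop (nhds ax))
    (hd : Filter.Tendsto (fun n : ℕ => xs (-(n : ℤ))) Filter.atTop (nhds dx)) :
    U x ax = ax ∧ U x dx = dx ∧ (U ax dx = ax ∨ U ax dx = dx) := by
  obtain ⟨he', hcl, hcomm, hassoc, hm2, hm1, hne⟩ := hU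
  have hx' : x ∈ Set.Icc (0:ℝ) 1 := ⟨hx.1.le, hx.2.le⟩
  have hne' : ∀ s ∈ Set.Icc (0:ℝ) 1, U e s = s := fun s hs => by
    rw [hcomm e he' s hs, hne s hs]
  have hyx : U y x = e := by rw [hcomm y hy x hx', hxy]
  have hfg : ∀ s ∈ Set.Icc (0:ℝ) 1, U x (U y s) = s := fun s hs => by
    rw [← hassoc x hx' y hy s hs, hxy, hne' s hs]
  have hgf : ∀ s ∈ Set.Icc (0:ℝ) 1, U y (U x s) = s := fun s hs => by
    rw [← hassoc y hy x hx' s hs, hyx, hne' s hs]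
  have hp : ∀ n : ℕ, xs (n : ℤ) ∈ Set.Icc (0:ℝ) 1 ∧ xs (n : ℤ) ≤ e := by
    intro n
    induction n with
    | zero => simpa [hxs0] using he'
    | succ k ih =>
      push_cast
      rw [hxsp k]
      refine ⟨hcl x hx' _ ih.1, ?_⟩
      have h1 := hm2 x hx' _ ih.1 e he' ih.2
      rw [hne x hx'] at h1
      linarith
  have hneg : ∀ k : ℕ, -((k + 1 : ℕ) : ℤ) = -(k : ℤ) - 1 := fun k => by push_cast; ring
  have hn : ∀ n : ℕ, xs (-(n : ℤ)) ∈ Set.Icc (0:ℝ) 1 ∧ e ≤ xs (-(n : ℤ)) := by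
    intro n
    induction n with
    | zero => simpa [hxs0] using he'
    | succ k ih =>
      rw [hneg k, hxsn k]
      refine ⟨hcl y hy _ ih.1, ?_⟩
      have h1 := hm2 y hy e he' _ ih.1 ih.2
      rw [hne y hy] at h1
      linarith
  have haI : ax ∈ Set.Icc (0:ℝ) 1 :=
    isClosed_Icc.mem_of_tendsto ha (Filter.Eventually.of_forall fun n => (hp n).1)
  have hdI : dx ∈ Set.Icc (0:ℝ) 1 :=
    isClosed_Icc.mem_of_tendsto hd (Filter.Eventually.of_forall fun n => (hn n).1)
  have hae : ax ≤ e := le_of_tendsto' ha fun n => (hp n).2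
  have hde : e ≤ dx := ge_of_tendsto' hd fun n => (hn n).2
  have hfa : U x ax = ax := by
    have h1 : Filter.Tendsto (fun n : ℕ => U x (xs (n : ℤ))) Filter.atTop (nhds (U x ax)) :=
      (hcutc ax haI).tendsto.comp (tendsto_nhdsWithin_iff.2
        ⟨ha, Filter.Eventually.of_forall fun n => (hp n).1⟩)
    have h2 := (Filter.tendsto_add_atTop_iff_nat 1).2 ha
    refine tendsto_nhds_unique h1 (h2.congr fun n => ?_)
    push_cast
    exact hxsp n
  have hfd : U x dx = dx := by
    have h2 := (Filter.tendsto_add_atTop_iff_nat 1).2 hd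
    have h1 : Filter.Tendsto (fun n : ℕ => U x (xs (-((n + 1 : ℕ) : ℤ)))) Filter.atTop
        (nhds (U x dx)) :=
      (hcutc dx hdI).tendsto.comp (tendsto_nhdsWithin_iff.2
        ⟨h2, Filter.Eventually.of_forall fun n => (hn (n + 1)).1⟩)
    refine tendsto_nhds_unique h1 (hd.congr fun n => ?_)
    rw [hneg n, hxsn n, hfg _ (hn n).1]
  refine ⟨hfa, hfd, ?_⟩
  have hz : U ax dx ∈ Set.Icc (0:ℝ) 1 := hcl _ haI _ hdI
  have hfz : U x (U ax dx) = U ax dx := by rw [← hassoc x hx' ax haI dx hdI, hfa]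
  have haz : ax ≤ U ax dx := by
    have := hm2 ax haI e he' dx hdI hde
    rwa [hne ax haI] at this
  have hzd : U ax dx ≤ dx := by
    have := hm1 ax haI e he' dx hdI hae
    rwa [hne' dx hdI] at this
  generalize U ax dx = z at *
  have hgz : U y z = z := by
    have := hgf z hz
    rwa [hfz] at this
  rcases le_total z e with h | h
  · left
    refine le_antisymm (ge_of_tendsto' ha fun n => ?_) haz
    induction n with
    | zero => simpa [hxs0] using h
    | succ k ih =>
      push_cast
      rw [hxsp k, ← hfz]
      exact hm2 x hx' _ hz _ (hp k).1 ih
  · right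
    refine le_antisymm hzd (le_of_tendsto' hd fun n => ?_)
    induction n with
    | zero => simpa [hxs0] using h
    | succ k ih =>
      rw [hneg k, hxsn k, ← hgz]
      exact hm2 y hy _ (hn k).1 _ hz ih
end

section
/- Let U : [0,1]² → [0,1] be a disjunctive uninorm with neutral element e ∈ (0,1) and let x ∈ (0,1), x < e, be such that s ↦ U(x, s) is continuous with range [0,1]; let y > e satisfy U(x, y) = e. Define x_U^(0) = e, x_U^(n) = U(x, x_U^(n−1)) and x_U^(−n) = U(y, x_U^(−n+1)) for n ≥ 1, a_x = lim_{n→∞} x_U^(n) and d_x = lim_{n→∞} x_U^(−n). If U(x, t) = t for all t ∈ [0, a_x] ∪ [d_x, 1], then: (i) U(s, t) = t for all s ∈ (a_x, d_x) and all t ∈ [0, a_x] ∪ [d_x, 1]; (ii) U(s, t) ∈ [0, a_x] ∪ [d_x, 1] for all s, t ∈ [0, a_x] ∪ [d_x, 1]; (iii) U(s, t) ∈ (a_x, d_x) for all s, t ∈ (a_x, d_x); i.e., U is an ordinal sum of a semigroup on (a_x, d_x) and a semigroup on [0, a_x] ∪ [d_x, 1]. -/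
theorem stmt15 (U : ℝ → ℝ → ℝ) (e : ℝ) (he : e ∈ Set.Ioo (0:ℝ) 1)
    (hU : IsUninorm U e) (hdisj : U 1 0 = 1)
    (x : ℝ) (hx : x ∈ Set.Ioo (0:ℝ) 1) (hxe : x < e)
    (hcutc : ContinuousOn (fun s => U x s) (Set.Icc 0 1))
    (hcutr : (fun s => U x s) '' Set.Icc 0 1 = Set.Icc 0 1)
    (y : ℝ) (hy : y ∈ Set.Icc (0:ℝ) 1) (hye : e < y) (hxy : U x y = e)
    (xs : ℤ → ℝ) (hxs0 : xs 0 = e)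
    (hxsp : ∀ n : ℕ, xs ((n : ℤ) + 1) = U x (xs (n : ℤ)))
    (hxsn : ∀ n : ℕ, xs (-(n : ℤ) - 1) = U y (xs (-(n : ℤ))))
    (ax dx : ℝ)
    (ha : Filter.Tendsto (fun n : ℕ => xs (n : ℤ)) Filter.atTop (nhds ax))
    (hd : Filter.Tendsto (fun n : ℕ => xs (-(n : ℤ))) Filter.atTop (nhds dx))
    (hfix : ∀ t ∈ Set.Icc (0:ℝ) ax ∪ Set.Icc dx 1, U x t = t) :
    (∀ s ∈ Set.Ioo ax dx, ∀ t ∈ Set.Icc (0:ℝ) ax ∪ Set.Icc dx 1, U s t = t) ∧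
    (∀ s ∈ Set.Icc (0:ℝ) ax ∪ Set.Icc dx 1, ∀ t ∈ Set.Icc (0:ℝ) ax ∪ Set.Icc dx 1,
      U s t ∈ Set.Icc (0:ℝ) ax ∪ Set.Icc dx 1) ∧
    (∀ s ∈ Set.Ioo ax dx, ∀ t ∈ Set.Ioo ax dx, U s t ∈ Set.Ioo ax dx) := by
  obtain ⟨he', hcl, hcomm, hassoc, hmr, hml, hne⟩ := hU
  have hxI : x ∈ Set.Icc (0:ℝ) 1 := ⟨hx.1.le, hx.2.le⟩
  have hP0 : ∀ n : ℕ, xs (n : ℤ) ∈ Set.Icc (0:ℝ) 1 := by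
    intro n
    induction n with
    | zero => simpa [hxs0] using he'
    | succ k ih =>
      have h := hxsp k
      push_cast
      rw [h]
      exact hcl _ hxI _ ih
  have hQs : ∀ n : ℕ, xs (-((n + 1 : ℕ) : ℤ)) = U y (xs (-(n : ℤ))) := by
    intro n
    rw [← hxsn n]
    congr 1
    push_cast
    ring
  have hQ0 : ∀ n : ℕ, xs (-(n : ℤ)) ∈ Set.Icc (0:ℝ) 1 := by
    intro n
    induction n with
    | zero => simpa [hxs0] using he'
    | succ k ih =>
      rw [hQs k]
      exact hcl _ hy _ ih
  obtain ⟨P, hP⟩ : ∃ P : ℕ → ℝ, ∀ n : ℕ, P n = xs (n : ℤ) := ⟨_, fun _ => rfl⟩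
  obtain ⟨Q, hQ⟩ : ∃ Q : ℕ → ℝ, ∀ n : ℕ, Q n = xs (-(n : ℤ)) := ⟨_, fun _ => rfl⟩
  simp only [← hP] at ha hP0
  simp only [← hQ] at hd hQ0 hQs
  have hPs : ∀ n, P (n + 1) = U x (P n) := by
    intro n
    rw [hP, hP, ← hxsp n]
    push_cast
    rfl
  have hPz : P 0 = e := by rw [hP]; simpa using hxs0
  have hQz : Q 0 = e := by rw [hQ]; simpa using hxs0
  clear hP hQ hxsp hxsn hxs0
  have hen : ∀ t ∈ Set.Icc (0:ℝ) 1, U e t = t := fun t ht => by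
    rw [hcomm _ he' _ ht, hne _ ht]
  have hmono : ∀ a ∈ Set.Icc (0:ℝ) 1, ∀ b ∈ Set.Icc (0:ℝ) 1, ∀ c ∈ Set.Icc (0:ℝ) 1,
      ∀ d ∈ Set.Icc (0:ℝ) 1, a ≤ c → b ≤ d → U a b ≤ U c d :=
    fun a h1 b h2 c h3 d h4 h5 h6 => (hml a h1 c h3 b h2 h5).trans (hmr c h3 b h2 d h4 h6)
  have hPQ : ∀ n, U (P n) (Q n) = e := by
    intro n
    induction n with
    | zero => rw [hPz, hQz]; exact hne e he'
    | succ k ih =>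
      rw [hPs, hQs, hcomm x hxI _ (hP0 k), hassoc _ (hP0 k) _ hxI _ (hcl _ hy _ (hQ0 k)),
        ← hassoc x hxI y hy _ (hQ0 k), hxy, hen _ (hQ0 k), ih]
  have hQP : ∀ n, U (Q n) (P n) = e := fun n => by
    rw [hcomm _ (hQ0 n) _ (hP0 n), hPQ]
  have hfP : ∀ t ∈ Set.Icc (0:ℝ) 1, U x t = t → ∀ n, U (P n) t = t := by
    intro t ht h n
    induction n with
    | zero => rw [hPz, hen t ht]
    | succ k ih => rw [hPs, hassoc _ hxI _ (hP0 k) _ ht, ih, h]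
  have hfQ : ∀ t ∈ Set.Icc (0:ℝ) 1, U x t = t → ∀ n, U (Q n) t = t := by
    intro t ht h n
    have hyt : U y t = t := by
      conv_lhs => rw [← h]
      rw [← hassoc _ hy _ hxI _ ht, hcomm _ hy _ hxI, hxy, hen t ht]
    induction n with
    | zero => rw [hQz, hen t ht]
    | succ k ih => rw [hQs, hassoc _ hy _ (hQ0 k) _ ht, ih, hyt]
  have hxe' : U x e ≠ e := by
    rw [hne x hxI]; exact hxe.ne
  have hPa : ∀ n, ax < P n := by
    intro n
    by_contra! h
    have h1 := hfix (P n) (Or.inl ⟨(hP0 n).1, h⟩)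
    have h2 := hfQ _ (hP0 n) h1 n
    rw [hQP] at h2
    rw [← h2] at h1
    exact hxe' h1
  have hQd : ∀ n, Q n < dx := by
    intro n
    by_contra! h
    have h1 := hfix (Q n) (Or.inr ⟨h, (hQ0 n).2⟩)
    have h2 := hfP _ (hQ0 n) h1 n
    rw [hPQ] at h2
    rw [← h2] at h1
    exact hxe' h1
  have ha0 : 0 ≤ ax := ge_of_tendsto' ha fun n => (hP0 n).1
  have hd1 : dx ≤ 1 := le_of_tendsto' hd fun n => (hQ0 n).2
  have had : ax < dx := by
    have h1 := hPa 0
    have h2 := hQd 0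
    rw [hPz] at h1
    rw [hQz] at h2
    exact h1.trans h2
  have hFI : ∀ t ∈ Set.Icc (0:ℝ) ax ∪ Set.Icc dx 1, t ∈ Set.Icc (0:ℝ) 1 := by
    rintro t (h | h)
    · exact ⟨h.1, by linarith [h.2]⟩
    · exact ⟨by linarith [h.1], h.2⟩
  have hMI : ∀ t ∈ Set.Ioo ax dx, t ∈ Set.Icc (0:ℝ) 1 := fun t h =>
    ⟨by linarith [h.1], by linarith [h.2]⟩
  have hbr : ∀ s ∈ Set.Ioo ax dx, ∀ᶠ n in Filter.atTop, P n ≤ s ∧ s ≤ Q n := by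
    intro s hs
    filter_upwards [ha.eventually_lt_const hs.1, hd.eventually_const_lt hs.2] with n h1 h2
    exact ⟨h1.le, h2.le⟩
  refine ⟨?_, ?_, ?_⟩
  · intro s hs t ht
    obtain ⟨n, h1, h2⟩ := (hbr s hs).exists
    have hsI := hMI s hs
    have htI := hFI t ht
    have h3 := hml _ (hP0 n) _ hsI _ htI h1
    have h4 := hml _ hsI _ (hQ0 n) _ htI h2
    rw [hfP t htI (hfix t ht)] at h3
    rw [hfQ t htI (hfix t ht)] at h4
    exact le_antisymm h4 h3
  · intro s hs t ht
    have hsI := hFI s hs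
    have htI := hFI t ht
    have hw := hcl s hsI t htI
    have hwf : U x (U s t) = U s t := by
      rw [← hassoc _ hxI _ hsI _ htI, hfix s hs]
    by_contra hcon
    have hwm : U s t ∈ Set.Ioo ax dx := by
      constructor
      · by_contra! h
        exact hcon (Or.inl ⟨hw.1, h⟩)
      · by_contra! h
        exact hcon (Or.inr ⟨h, hw.2⟩)
    obtain ⟨m, -, h2⟩ := (hbr _ hwm).exists
    have hle : U s t ≤ e := by
      have h := hmr _ (hP0 m) _ hw _ (hQ0 m) h2
      rwa [hPQ, hfP _ hw hwf] at h
    have hall : ∀ n, U s t ≤ P n := by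
      intro n
      have h := hmr _ (hP0 n) _ hw _ he' hle
      rwa [hne _ (hP0 n), hfP _ hw hwf] at h
    exact absurd (ge_of_tendsto' ha hall) (not_le.mpr hwm.1)
  · intro s hs t ht
    have hsI := hMI s hs
    have htI := hMI t ht
    have hw := hcl s hsI t htI
    obtain ⟨n, ⟨h1, h2⟩, h3, h4⟩ := ((hbr s hs).and (hbr t ht)).exists
    have hp := hP0 n
    have hq := hQ0 n
    constructor
    · by_contra! h
      have hwf := hfQ _ hw (hfix _ (Or.inl ⟨hw.1, h⟩)) n
      have h5 := hmr _ hq _ (hcl _ hp _ hp) _ hw (hmono _ hp _ hp _ hsI _ htI h1 h3)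
      rw [hwf, ← hassoc _ hq _ hp _ hp, hQP, hen _ hp] at h5
      linarith [hPa n]
    · by_contra! h
      have hwf := hfP _ hw (hfix _ (Or.inr ⟨h, hw.2⟩)) n
      have h5 := hmr _ hp _ hw _ (hcl _ hq _ hq) (hmono _ hsI _ htI _ hq _ hq h2 h4)
      rw [hwf, ← hassoc _ hp _ hq _ hq, hPQ, hen _ hq] at h5
      linarith [hQd n]
end

section
/- Let f : [0,1] → [0,1] be a continuous, strictly increasing function with f(0) = 0, f(1) = 1, and f(y) = e for some y, e ∈ (0,1) with y > e; set x = f(e). Define f^(0) = id, f^(n) = f ∘ f^(n−1) and f^(−n) = f^{−1} ∘ f^(−n+1) for n ≥ 1, and set a = lim_{n→∞} f^(n)(x), d = lim_{n→∞} f^(−n)(x). Let F : [x,e]² → [f(x), e] be a commutative, non-decreasing function such that F(s, e) = s and F(s, x) = f(s) for all s ∈ [x,e], and such that for all s, t, u ∈ (x, e], if F(s,t) ∈ (f^(n+1)(e), f^(n)(e)] and F(t,u) ∈ (f^(m+1)(e), f^(m)(e)] for some n, m ∈ {0,1}, then f^(m)( F(s, f^(−m)(F(t,u))) ) = f^(n)(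 F( f^(−n)(F(s,t)), u) ). Then the function U : (a,d)² → (a,d) defined by U(s,t) = f^(n+m)( F( f^(−n)(s), f^(−m)(t) ) ) whenever s ∈ (f^(n+1)(e), f^(n)(e)] and t ∈ (f^(m+1)(e), f^(m)(e)] for n, m ∈ ℤ is well defined, maps into (a,d), and is a uninorm on (a,d): it is commutative, associative, non-decreasing in each variable, and has neutral element e. -/
theorem stmt16 (f : ℝ → ℝ)
    (hfc : ContinuousOn f (Set.Icc 0 1))
    (hfm : StrictMonoOn f (Set.Icc 0 1))
    (hfmaps : ∀ s ∈ Set.Icc (0:ℝ) 1, f s ∈ Set.Icc (0:ℝ) 1)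
    (hf0 : f 0 = 0) (hf1 : f 1 = 1)
    (y e : ℝ) (hy : y ∈ Set.Ioo (0:ℝ) 1) (he : e ∈ Set.Ioo (0:ℝ) 1)
    (hye : e < y) (hfy : f y = e)
    (x : ℝ) (hx : x = f e)
    -- the iterates `f^(n)`, `n ∈ ℤ`, of `f`: `f^(0) = id`, `f^(n+1) = f ∘ f^(n)`
    (fn : ℤ → ℝ → ℝ) (hfn0 : ∀ s, fn 0 s = s)
    (hfns : ∀ n : ℤ, ∀ s ∈ Set.Icc (0:ℝ) 1, fn (n + 1) s = f (fn n s))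
    (hfnmaps : ∀ n : ℤ, ∀ s ∈ Set.Icc (0:ℝ) 1, fn n s ∈ Set.Icc (0:ℝ) 1)
    (a d : ℝ)
    (ha : Filter.Tendsto (fun n : ℕ => fn (n : ℤ) x) Filter.atTop (nhds a))
    (hd : Filter.Tendsto (fun n : ℕ => fn (-(n : ℤ)) x) Filter.atTop (nhds d))
    (F : ℝ → ℝ → ℝ)
    (hFmaps : ∀ s ∈ Set.Icc x e, ∀ t ∈ Set.Icc x e, F s t ∈ Set.Icc (f x) e)
    (hFcomm : ∀ s ∈ Set.Icc x e, ∀ t ∈ Set.Icc x e, F s t = F t s)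
    (hFmono : ∀ s ∈ Set.Icc x e, ∀ t ∈ Set.Icc x e, ∀ u ∈ Set.Icc x e,
      t ≤ u → F s t ≤ F s u)
    (hFe : ∀ s ∈ Set.Icc x e, F s e = s)
    (hFx : ∀ s ∈ Set.Icc x e, F s x = f s)
    (hFas : ∀ s ∈ Set.Ioc x e, ∀ t ∈ Set.Ioc x e, ∀ u ∈ Set.Ioc x e, ∀ n m : ℤ,
      (n = 0 ∨ n = 1) → (m = 0 ∨ m = 1) →
      F s t ∈ Set.Ioc (fn (n + 1) e) (fn n e) → F t u ∈ Set.Ioc (fn (m + 1) e) (fn m e) →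
      fn m (F s (fn (-m) (F t u))) = fn n (F (fn (-n) (F s t)) u))
    (U : ℝ → ℝ → ℝ)
    (hU : ∀ n m : ℤ, ∀ s ∈ Set.Ioc (fn (n + 1) e) (fn n e),
      ∀ t ∈ Set.Ioc (fn (m + 1) e) (fn m e),
      U s t = fn (n + m) (F (fn (-n) s) (fn (-m) t))) :
    -- well-definedness: the intervals `(f^(n+1)(e), f^(n)(e)]` partition `(a,d)`
    (∀ s ∈ Set.Ioo a d, ∃! n : ℤ, s ∈ Set.Ioc (fn (n + 1) e) (fn n e)) ∧
    -- `U` maps `(a,d)²` into `(a,d)`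
    (∀ s ∈ Set.Ioo a d, ∀ t ∈ Set.Ioo a d, U s t ∈ Set.Ioo a d) ∧
    -- commutativity
    (∀ s ∈ Set.Ioo a d, ∀ t ∈ Set.Ioo a d, U s t = U t s) ∧
    -- associativity
    (∀ s ∈ Set.Ioo a d, ∀ t ∈ Set.Ioo a d, ∀ u ∈ Set.Ioo a d,
      U (U s t) u = U s (U t u)) ∧
    -- monotonicity in each variable
    (∀ s ∈ Set.Ioo a d, ∀ t ∈ Set.Ioo a d, ∀ u ∈ Set.Ioo a d, t ≤ u → U s t ≤ U s u) ∧
    (∀ s ∈ Set.Ioo a d, ∀ t ∈ Set.Ioo a d, ∀ u ∈ Set.Ioo a d, s ≤ t → U s u ≤ U t u) ∧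
    -- neutral element
    (∀ s ∈ Set.Ioo a d, U s e = s) := by
  have hyI : y ∈ Set.Icc (0:ℝ) 1 := ⟨hy.1.le, hy.2.le⟩
  have heI : e ∈ Set.Icc (0:ℝ) 1 := ⟨he.1.le, he.2.le⟩
  have hxe : x < e := by
    rw [hx]; have := hfm heI hyI hye; rwa [hfy] at this
  have hxI : x ∈ Set.Icc (0:ℝ) 1 := hx ▸ hfmaps e heI
  have hI : ∀ s ∈ Set.Icc x e, s ∈ Set.Icc (0:ℝ) 1 := fun s hs =>
    ⟨hxI.1.trans hs.1, hs.2.trans heI.2⟩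
  have hI' : ∀ s ∈ Set.Ioc x e, s ∈ Set.Icc (0:ℝ) 1 := fun s hs => hI s ⟨hs.1.le, hs.2⟩
  have hfn1 : ∀ s ∈ Set.Icc (0:ℝ) 1, fn 1 s = f s := by
    intro s hs
    have := hfns 0 s hs
    rwa [zero_add, hfn0] at this
  have hadd : ∀ n m : ℤ, ∀ s ∈ Set.Icc (0:ℝ) 1, fn (n + m) s = fn n (fn m s) := by
    intro n m s hs
    induction n using Int.induction_on with
    | zero => rw [zero_add, hfn0]
    | succ i ih =>
      rw [hfns _ _ (hfnmaps m s hs), ← ih, ← hfns _ _ hs]; congr 1; ring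
    | pred i ih =>
      apply hfm.injOn (hfnmaps _ _ hs) (hfnmaps _ _ (hfnmaps _ _ hs))
      rw [← hfns _ _ hs, ← hfns _ _ (hfnmaps m s hs), sub_add_cancel, ← ih]
      congr 1; ring
  have hmono : ∀ n : ℤ, StrictMonoOn (fn n) (Set.Icc 0 1) := by
    intro n s hs t ht hst
    induction n using Int.induction_on with
    | zero => rwa [hfn0, hfn0]
    | succ i ih =>
      rw [hfns _ _ hs, hfns _ _ ht]
      exact hfm (hfnmaps _ _ hs) (hfnmaps _ _ ht) ih
    | pred i ih =>
      rw [← hfm.lt_iff_lt (hfnmaps _ _ hs) (hfnmaps _ _ ht), ← hfns _ _ hs, ← hfns _ _ ht,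
        sub_add_cancel]
      exact ih
  have hinv : ∀ n : ℤ, ∀ s ∈ Set.Icc (0:ℝ) 1, fn n (fn (-n) s) = s := by
    intro n s hs; rw [← hadd _ _ _ hs, add_neg_cancel, hfn0]
  have hinv' : ∀ n : ℤ, ∀ s ∈ Set.Icc (0:ℝ) 1, fn (-n) (fn n s) = s := by
    intro n s hs; rw [← hadd _ _ _ hs, neg_add_cancel, hfn0]
  have hex : ∀ n : ℤ, fn (n + 1) e = fn n x := by
    intro n; rw [hadd _ _ _ heI, hfn1 _ heI, hx]
  have hanti : StrictAnti (fun n : ℤ => fn n e) := by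
    refine strictAnti_int_of_succ_lt ?_
    intro n
    rw [hex]; exact hmono n hxI heI hxe
  have hfx : ∀ s ∈ Set.Icc x e, f s ≤ s := by
    intro s hs
    rw [← hFx s hs]
    exact (hFmono s hs x ⟨le_rfl, hxe.le⟩ e ⟨hxe.le, le_rfl⟩ hxe.le).trans_eq (hFe s hs)
  have hantis : ∀ s ∈ Set.Icc x e, Antitone (fun n : ℤ => fn n s) := by
    intro s hs
    refine antitone_int_of_succ_le ?_
    intro n
    rw [hadd _ _ _ (hI s hs), hfn1 _ (hI s hs)]
    exact (hmono n).monotoneOn (hfmaps _ (hI s hs)) (hI s hs) (hfx s hs)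
  have hale : ∀ n : ℤ, a ≤ fn n e := by
    intro n
    refine le_of_tendsto ha ?_
    filter_upwards [Filter.eventually_ge_atTop n.toNat] with k hk
    rw [← hex]; exact hanti.antitone (by omega)
  have halt : ∀ n : ℤ, a < fn n e := fun n => (hale (n+1)).trans_lt (hanti (by omega))
  have hled : ∀ n : ℤ, fn n e ≤ d := by
    intro n
    refine ge_of_tendsto hd ?_
    filter_upwards [Filter.eventually_ge_atTop ((-n).toNat + 1)] with k hk
    rw [← hex]; exact hanti.antitone (by omega)
  have hltd : ∀ n : ℤ, fn n e < d := fun n => (hanti (by omega : n - 1 < n)).trans_le (hled (n-1))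
  have hJ : ∀ k : ℤ, ∀ s ∈ Set.Ioc x e, fn k s ∈ Set.Ioc (fn (k + 1) e) (fn k e) := by
    intro k s hs
    rw [hex]
    exact ⟨hmono k hxI (hI' s hs) hs.1, (hmono k).monotoneOn (hI' s hs) heI hs.2⟩
  have hJ' : ∀ k : ℤ, ∀ s ∈ Set.Ioc x e, fn k s ∈ Set.Ioo a d := by
    intro k s hs
    have := hJ k s hs
    exact ⟨(halt _).trans this.1, this.2.trans_lt (hltd _)⟩
  have hpart : ∀ s ∈ Set.Ioo a d, ∃! n : ℤ, s ∈ Set.Ioc (fn (n + 1) e) (fn n e) := by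
    intro s hs
    obtain ⟨N, hN⟩ := (ha.eventually (gt_mem_nhds hs.1)).exists
    obtain ⟨M, hM⟩ := (hd.eventually (lt_mem_nhds hs.2)).exists
    rw [← hex] at hN hM
    obtain ⟨n, hn, hmax⟩ := Int.exists_greatest_of_bdd (P := fun n : ℤ => s ≤ fn n e)
      ⟨(N:ℤ) + 1, fun z hz => by
        by_contra hc
        have := hanti (not_le.1 hc)
        simp only at this
        linarith⟩ ⟨_, hM.le⟩
    refine ⟨n, ⟨?_, hn⟩, ?_⟩
    · by_contra hc
      have := hmax (n+1) (not_lt.1 hc)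
      omega
    · intro m hm
      have h1 := hmax m hm.2
      by_contra hne
      have h2 : m + 1 ≤ n := by omega
      have h3 := hanti.antitone h2
      have := hm.1
      linarith
  have hrep : ∀ s ∈ Set.Ioo a d, ∃ k : ℤ, ∃ s' ∈ Set.Ioc x e, s = fn k s' := by
    intro s hs
    obtain ⟨n, hn, -⟩ := hpart s hs
    have hsI : s ∈ Set.Icc (0:ℝ) 1 :=
      ⟨(hfnmaps (n+1) e heI).1.trans hn.1.le, hn.2.trans (hfnmaps n e heI).2⟩
    rw [hex] at hn
    have h0 := hinv n s hsI
    refine ⟨n, fn (-n) s, ⟨?_, ?_⟩, h0.symm⟩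
    · rw [← (hmono n).lt_iff_lt hxI (hfnmaps _ _ hsI), h0]; exact hn.1
    · rw [← (hmono n).le_iff_le (hfnmaps _ _ hsI) heI, h0]; exact hn.2
  have hU' : ∀ k l : ℤ, ∀ s ∈ Set.Ioc x e, ∀ t ∈ Set.Ioc x e,
      U (fn k s) (fn l t) = fn (k + l) (F s t) := by
    intro k l s hs t ht
    rw [hU k l _ (hJ k s hs) _ (hJ l t ht), hinv' _ _ (hI' s hs), hinv' _ _ (hI' t ht)]
  have hc : ∀ s ∈ Set.Ioc x e, s ∈ Set.Icc x e := fun s hs => ⟨hs.1.le, hs.2⟩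
  have hxc : x ∈ Set.Icc x e := ⟨le_rfl, hxe.le⟩
  have hec : e ∈ Set.Icc x e := ⟨hxe.le, le_rfl⟩
  have hFlo : ∀ s ∈ Set.Icc x e, ∀ t ∈ Set.Icc x e, f s ≤ F s t := by
    intro s hs t ht
    rw [← hFx s hs]; exact hFmono s hs x hxc t ht ht.1
  have hFhi : ∀ s ∈ Set.Icc x e, ∀ t ∈ Set.Icc x e, F s t ≤ s := by
    intro s hs t ht
    exact (hFmono s hs t ht e hec ht.2).trans_eq (hFe s hs)
  have hFI : ∀ s ∈ Set.Icc x e, ∀ t ∈ Set.Icc x e, F s t ∈ Set.Icc (0:ℝ) 1 := by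
    intro s hs t ht
    have := hFmaps s hs t ht
    exact ⟨(hfmaps x hxI).1.trans this.1, this.2.trans heI.2⟩
  have hFrep : ∀ s ∈ Set.Ioc x e, ∀ t ∈ Set.Ioc x e, ∃ n : ℤ, (n = 0 ∨ n = 1) ∧
      ∃ w ∈ Set.Ioc x e, F s t = fn n w := by
    intro s hs t ht
    by_cases h : x < F s t
    · exact ⟨0, Or.inl rfl, F s t, ⟨h, (hFmaps s (hc s hs) t (hc t ht)).2⟩, (hfn0 _).symm⟩
    · have hF := hFI s (hc s hs) t (hc t ht)
      have h0 := hinv 1 _ hF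
      refine ⟨1, Or.inr rfl, fn (-1) (F s t), ⟨?_, ?_⟩, h0.symm⟩
      · rw [← (hmono 1).lt_iff_lt hxI (hfnmaps _ _ hF), h0, hfn1 _ hxI]
        exact (hfm hxI (hI' s hs) hs.1).trans_le (hFlo s (hc s hs) t (hc t ht))
      · rw [← (hmono 1).le_iff_le (hfnmaps _ _ hF) heI, h0, hfn1 _ heI, ← hx]
        exact not_lt.1 h
  have hcomm : ∀ s ∈ Set.Ioo a d, ∀ t ∈ Set.Ioo a d, U s t = U t s := by
    intro s hs t ht
    obtain ⟨k, s, hs', rfl⟩ := hrep s hs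
    obtain ⟨l, t, ht', rfl⟩ := hrep t ht
    rw [hU' _ _ _ hs' _ ht', hU' _ _ _ ht' _ hs', add_comm, hFcomm s (hc s hs') t (hc t ht')]
  have hm : ∀ s ∈ Set.Ioo a d, ∀ t ∈ Set.Ioo a d, ∀ u ∈ Set.Ioo a d, t ≤ u → U s t ≤ U s u := by
    intro s hs t ht u hu htu
    obtain ⟨k, s, hs', rfl⟩ := hrep s hs
    obtain ⟨m, t, ht', rfl⟩ := hrep t ht
    obtain ⟨p, u, hu', rfl⟩ := hrep u hu
    rw [hU' _ _ _ hs' _ ht', hU' _ _ _ hs' _ hu']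
    have hsc := hc s hs'
    have htc := hc t ht'
    have huc := hc u hu'
    have hpm : p ≤ m := by
      by_contra hcon
      have h1 := hanti.antitone (show m + 1 ≤ p by omega)
      have h2 := (hJ m t ht').1
      have h3 := (hJ p u hu').2
      linarith
    rcases hpm.eq_or_lt with rfl | hlt
    · apply (hmono _).monotoneOn (hFI _ hsc _ htc) (hFI _ hsc _ huc)
      exact hFmono s hsc t htc u huc (((hmono p).le_iff_le (hI t htc) (hI u huc)).1 htu)
    · calc fn (k + m) (F s t) ≤ fn (k + m) s :=
            (hmono _).monotoneOn (hFI _ hsc _ htc) (hI s hsc) (hFhi s hsc t htc)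
        _ ≤ fn (k + p + 1) s := hantis s hsc (by omega)
        _ = fn (k + p) (f s) := by rw [hadd _ _ _ (hI s hsc), hfn1 _ (hI s hsc)]
        _ ≤ fn (k + p) (F s u) :=
            (hmono _).monotoneOn (hfmaps _ (hI s hsc)) (hFI _ hsc _ huc) (hFlo s hsc u huc)
  refine ⟨hpart, ?_, hcomm, ?_, hm, ?_, ?_⟩
  · intro s hs t ht
    obtain ⟨k, s, hs', rfl⟩ := hrep s hs
    obtain ⟨l, t, ht', rfl⟩ := hrep t ht
    obtain ⟨n, -, w, hw, hF⟩ := hFrep s hs' t ht'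
    rw [hU' _ _ _ hs' _ ht', hF, ← hadd _ _ _ (hI' w hw)]
    exact hJ' _ _ hw
  · intro s hs t ht u hu
    obtain ⟨k, s, hs', rfl⟩ := hrep s hs
    obtain ⟨l, t, ht', rfl⟩ := hrep t ht
    obtain ⟨p, u, hu', rfl⟩ := hrep u hu
    obtain ⟨n, hn, w, hw, hF⟩ := hFrep s hs' t ht'
    obtain ⟨m, hm, v, hv, hG⟩ := hFrep t ht' u hu'
    have key := hFas s hs' t ht' u hu' n m hn hm (hF ▸ hJ n w hw) (hG ▸ hJ m v hv)
    rw [hF, hG, hinv' _ _ (hI' w hw), hinv' _ _ (hI' v hv)] at key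
    rw [hU' _ _ _ hs' _ ht', hU' _ _ _ ht' _ hu', hF, hG, ← hadd _ _ _ (hI' w hw),
      ← hadd _ _ _ (hI' v hv), hU' _ _ _ hw _ hu', hU' _ _ _ hs' _ hv,
      show k + l + n + p = (k + l + p) + n by ring,
      show k + (l + p + m) = (k + l + p) + m by ring,
      hadd _ _ _ (hFI _ (hc w hw) _ (hc u hu')), hadd _ _ _ (hFI _ (hc s hs') _ (hc v hv)), key]
  · intro s hs t ht u hu hst
    rw [hcomm s hs u hu, hcomm t ht u hu]
    exact hm u hu s hs t ht hst
  · intro s hs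
    obtain ⟨k, s, hs', rfl⟩ := hrep s hs
    have := hU' k 0 s hs' e ⟨hxe, le_rfl⟩
    rwa [hfn0, add_zero, hFe s (hc s hs')] at this
end

section
/- Define U₁ : [0,1]² → [0,1] as follows: U₁(x,y) = 1 if max(x,y) = 1; U₁(x,y) = 0 if min(x,y) = 0 and max(x,y) < 1; and U₁(x,y) = min( x^(2^m), y^(2^n) ) whenever x ∈ (2^(−2^(n+1)), 2^(−2^n)] and y ∈ (2^(−2^(m+1)), 2^(−2^m)] for n, m ∈ ℤ. Then U₁ is well defined and is a disjunctive uninorm with neutral element 1/2; moreover, U₁(2^(−2^n), y) = y^(2^n) for all y ∈ (0,1) and all n ∈ ℤ. -/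
/-- The point `u^(n) = 2^(−2^n)` for `n ∈ ℤ`. -/
noncomputable def uPt (n : ℤ) : ℝ := (2 : ℝ) ^ (-((2 : ℝ) ^ n))

/-- The order-reversing parametrisation of `(0,1)` by the reals. -/
noncomputable def EE (s : ℝ) : ℝ := (2 : ℝ) ^ (-((2 : ℝ) ^ s))

/-- The operation on the parameters. -/
noncomputable def VV (s t : ℝ) : ℝ := max (s + ⌊t⌋) (t + ⌊s⌋)

lemma EE_int (n : ℤ) : EE n = uPt n := by
  simp [EE, uPt, Real.rpow_intCast]

lemma EE_le {s t : ℝ} : EE s ≤ EE t ↔ t ≤ s := by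
  unfold EE
  rw [Real.rpow_le_rpow_left_iff (by norm_num), neg_le_neg_iff,
    Real.rpow_le_rpow_left_iff (by norm_num)]

lemma EE_lt {s t : ℝ} : EE s < EE t ↔ t < s := by
  rw [← not_le, EE_le, not_le]

lemma EE_pos (s : ℝ) : 0 < EE s := by unfold EE; positivity

lemma EE_lt_one (s : ℝ) : EE s < 1 := by
  unfold EE
  apply Real.rpow_lt_one_of_one_lt_of_neg (by norm_num)
  have : (0:ℝ) < 2 ^ s := by positivity
  linarith

lemma EE_surj {x : ℝ} (h0 : 0 < x) (h1 : x < 1) : ∃ s, x = EE s := by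
  have hl : 0 < -Real.logb 2 x := by
    have := Real.logb_neg (b := 2) (by norm_num) h0 h1
    linarith
  refine ⟨Real.logb 2 (-Real.logb 2 x), ?_⟩
  unfold EE
  rw [Real.rpow_logb (by norm_num) (by norm_num) hl, neg_neg,
    Real.rpow_logb (by norm_num) (by norm_num) h0]

lemma EE_pow (s : ℝ) (m : ℤ) : EE s ^ ((2:ℝ) ^ m) = EE (s + m) := by
  unfold EE
  rw [← Real.rpow_mul (by norm_num), Real.rpow_add (by norm_num), Real.rpow_intCast, neg_mul]

lemma EE_mem (s : ℝ) (n : ℤ) : EE s ∈ Set.Ioc (uPt (n + 1)) (uPt n) ↔ ⌊s⌋ = n := by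
  rw [← EE_int, ← EE_int, Set.mem_Ioc, EE_lt, EE_le, Int.floor_eq_iff]
  push_cast
  tauto

lemma EE_min (s t : ℝ) : min (EE s) (EE t) = EE (max s t) := by
  rcases le_total s t with h | h
  · rw [max_eq_right h, min_eq_right (EE_le.2 h)]
  · rw [max_eq_left h, min_eq_left (EE_le.2 h)]

lemma VV_comm (s t : ℝ) : VV s t = VV t s := by
  unfold VV; rw [max_comm]

lemma VV_eq (s t : ℝ) : VV s t = ((⌊s⌋ + ⌊t⌋ : ℤ) : ℝ) + max (Int.fract s) (Int.fract t) := by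
  unfold VV
  rw [← max_add_add_left]
  push_cast
  congr 1
  · linarith [Int.floor_add_fract s]
  · linarith [Int.floor_add_fract t]

lemma VV_floor (s t : ℝ) : ⌊VV s t⌋ = ⌊s⌋ + ⌊t⌋ := by
  rw [VV_eq, Int.floor_intCast_add]
  have : ⌊max (Int.fract s) (Int.fract t)⌋ = 0 := by
    rw [Int.floor_eq_zero_iff]
    exact ⟨le_max_of_le_left (Int.fract_nonneg s), max_lt (Int.fract_lt_one s) (Int.fract_lt_one t)⟩
  omega

lemma VV_fract (s t : ℝ) : Int.fract (VV s t) = max (Int.fract s) (Int.fract t) := by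
  rw [← Int.self_sub_floor, VV_floor, VV_eq]; ring

lemma VV_assoc (s t r : ℝ) : VV (VV s t) r = VV s (VV t r) := by
  rw [VV_eq (VV s t), VV_eq s (VV t r), VV_floor, VV_floor, VV_fract, VV_fract, max_assoc, add_assoc]

lemma VV_mono (s : ℝ) {t r : ℝ} (h : t ≤ r) : VV s t ≤ VV s r := by
  have hf : (⌊t⌋ : ℝ) ≤ ⌊r⌋ := by exact_mod_cast Int.floor_mono h
  unfold VV
  exact max_le_max (by linarith) (by linarith)

lemma VV_int (n : ℤ) (t : ℝ) : VV n t = t + n := by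
  unfold VV
  rw [Int.floor_intCast]
  apply max_eq_right
  linarith [Int.floor_le t]

lemma unit_cases {x : ℝ} (h : x ∈ Set.Icc (0:ℝ) 1) : x = 0 ∨ x = 1 ∨ ∃ s, x = EE s := by
  rcases h.1.eq_or_lt with h0 | h0
  · exact Or.inl h0.symm
  rcases h.2.eq_or_lt with h1 | h1
  · exact Or.inr (Or.inl h1)
  · exact Or.inr (Or.inr (EE_surj h0 h1))

theorem stmt17 (U₁ : ℝ → ℝ → ℝ)
    (htop : ∀ x ∈ Set.Icc (0:ℝ) 1, ∀ y ∈ Set.Icc (0:ℝ) 1, max x y = 1 → U₁ x y = 1)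
    (hbot : ∀ x ∈ Set.Icc (0:ℝ) 1, ∀ y ∈ Set.Icc (0:ℝ) 1,
      min x y = 0 → max x y < 1 → U₁ x y = 0)
    (hmid : ∀ n m : ℤ, ∀ x ∈ Set.Ioc (uPt (n + 1)) (uPt n), ∀ y ∈ Set.Ioc (uPt (m + 1)) (uPt m),
      U₁ x y = min (x ^ ((2 : ℝ) ^ m)) (y ^ ((2 : ℝ) ^ n))) :
    (∀ x ∈ Set.Ioo (0:ℝ) 1, ∃! n : ℤ, x ∈ Set.Ioc (uPt (n + 1)) (uPt n)) ∧
    IsUninorm U₁ (1/2) ∧ U₁ 1 0 = 1 ∧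
    (∀ n : ℤ, ∀ y ∈ Set.Ioo (0:ℝ) 1, U₁ (uPt n) y = y ^ ((2 : ℝ) ^ n)) := by
  have hE : ∀ s, EE s ∈ Set.Icc (0:ℝ) 1 := fun s => ⟨(EE_pos s).le, (EE_lt_one s).le⟩
  have m0 : (0:ℝ) ∈ Set.Icc (0:ℝ) 1 := by simp
  have m1 : (1:ℝ) ∈ Set.Icc (0:ℝ) 1 := by simp
  have hV : ∀ s t, U₁ (EE s) (EE t) = EE (VV s t) := by
    intro s t
    rw [hmid ⌊s⌋ ⌊t⌋ _ ((EE_mem _ _).2 rfl) _ ((EE_mem _ _).2 rfl), EE_pow, EE_pow, EE_min]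
    rfl
  have h1E : ∀ s, U₁ 1 (EE s) = 1 := fun s => htop _ m1 _ (hE s) (max_eq_left (hE s).2)
  have hE1 : ∀ s, U₁ (EE s) 1 = 1 := fun s => htop _ (hE s) _ m1 (max_eq_right (hE s).2)
  have h0E : ∀ s, U₁ 0 (EE s) = 0 := fun s => hbot _ m0 _ (hE s) (min_eq_left (hE s).1)
    (by rw [max_eq_right (hE s).1]; exact EE_lt_one s)
  have hE0 : ∀ s, U₁ (EE s) 0 = 0 := fun s => hbot _ (hE s) _ m0 (min_eq_right (hE s).1)
    (by rw [max_eq_left (hE s).1]; exact EE_lt_one s)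
  have h00 : U₁ 0 0 = 0 := hbot _ m0 _ m0 (by simp) (by simp)
  have h01 : U₁ 0 1 = 1 := htop _ m0 _ m1 (by simp)
  have h10 : U₁ 1 0 = 1 := htop _ m1 _ m0 (by simp)
  have h11 : U₁ 1 1 = 1 := htop _ m1 _ m1 (by simp)
  have hhalf : (1/2 : ℝ) = EE ((0:ℤ):ℝ) := by
    simp [EE, Real.rpow_neg_one]
  have hcl : ∀ x ∈ Set.Icc (0:ℝ) 1, ∀ y ∈ Set.Icc (0:ℝ) 1, U₁ x y ∈ Set.Icc (0:ℝ) 1 := by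
    intro x hx y hy
    rcases unit_cases hx with rfl | rfl | ⟨s, rfl⟩ <;>
    rcases unit_cases hy with rfl | rfl | ⟨t, rfl⟩ <;>
    simp only [hV, h1E, hE1, h0E, hE0, h00, h01, h10, h11, m0, m1, hE]
  have hcomm : ∀ x ∈ Set.Icc (0:ℝ) 1, ∀ y ∈ Set.Icc (0:ℝ) 1, U₁ x y = U₁ y x := by
    intro x hx y hy
    rcases unit_cases hx with rfl | rfl | ⟨s, rfl⟩ <;>
    rcases unit_cases hy with rfl | rfl | ⟨t, rfl⟩ <;>
    simp only [hV, h1E, hE1, h0E, hE0, h00, h01, h10, h11]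
    rw [VV_comm]
  have hmono : ∀ x ∈ Set.Icc (0:ℝ) 1, ∀ y ∈ Set.Icc (0:ℝ) 1, ∀ z ∈ Set.Icc (0:ℝ) 1,
      y ≤ z → U₁ x y ≤ U₁ x z := by
    intro x hx y hy z hz hyz
    rcases unit_cases hy with rfl | rfl | ⟨t, rfl⟩
    · rcases unit_cases hx with rfl | rfl | ⟨s, rfl⟩
      · rw [h00]; exact (hcl _ hx _ hz).1
      · rw [htop 1 m1 z hz (max_eq_left hz.2), h10]
      · rw [hE0]; exact (hcl _ hx _ hz).1
    · rw [le_antisymm hz.2 hyz]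
    · rcases unit_cases hz with rfl | rfl | ⟨r, rfl⟩
      · exact absurd hyz (not_le.2 (EE_pos t))
      · rw [htop x hx 1 m1 (max_eq_right hx.2)]; exact (hcl _ hx _ hy).2
      · rcases unit_cases hx with rfl | rfl | ⟨s, rfl⟩
        · rw [h0E, h0E]
        · rw [h1E, h1E]
        · rw [hV, hV, EE_le]; exact VV_mono s (EE_le.1 hyz)
  refine ⟨?_, ⟨by norm_num, hcl, hcomm, ?_, hmono, ?_, ?_⟩, h10, ?_⟩
  · rintro x ⟨hx0, hx1⟩
    obtain ⟨s, rfl⟩ := EE_surj hx0 hx1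
    exact ⟨⌊s⌋, (EE_mem _ _).2 rfl, fun n hn => ((EE_mem _ _).1 hn).symm⟩
  · intro x hx y hy z hz
    rcases unit_cases hx with rfl | rfl | ⟨s, rfl⟩ <;>
    rcases unit_cases hy with rfl | rfl | ⟨t, rfl⟩ <;>
    rcases unit_cases hz with rfl | rfl | ⟨r, rfl⟩ <;>
    simp only [hV, h1E, hE1, h0E, hE0, h00, h01, h10, h11, VV_assoc]
  · intro x hx y hy z hz hxy
    rw [hcomm x hx z hz, hcomm y hy z hz]
    exact hmono z hz x hx y hy hxy
  · intro x hx
    rw [hhalf]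
    rcases unit_cases hx with rfl | rfl | ⟨s, rfl⟩
    · exact h0E _
    · exact h1E _
    · rw [hV, VV_comm, VV_int]; simp
  · rintro n y ⟨hy0, hy1⟩
    obtain ⟨t, rfl⟩ := EE_surj hy0 hy1
    rw [← EE_int, hV, VV_int, EE_pow]
end

section
/- Let U₁ : [0,1]² → [0,1] be defined by: U₁(x,y) = 1 if max(x,y) = 1; U₁(x,y) = 0 if min(x,y) = 0 and max(x,y) < 1; and U₁(x,y) = min( x^(2^m), y^(2^n) ) whenever x ∈ (2^(−2^(n+1)), 2^(−2^n)] and y ∈ (2^(−2^(m+1)), 2^(−2^m)] for n, m ∈ ℤ. Define N₁ : [0,1] → [0,1] by N₁(0) = 1, N₁(1) = 0, and N₁(x) = 2^(−2^(−log₂(−log₂ x))) = 2^(1/log₂ x) for x ∈ (0,1); define N₂(x) = (N₁(x))² and U₂(x,y) = U₁(2^(−1/2), U₁(x,y)). Then: (i) N₁ and N₂ are continuous, strictly decreasing fuzzy negations, and N₁(2^(−2^n)) = 2^(−2^(−n)) for all n ∈ ℤ; (ii) U₂ is a disjunctive uninorm with neutral element 1/4; (iii) U₂(N₂(x), y) =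 U₁(N₁(x), y) for all x, y ∈ [0,1]. -/
open Classical in
/-- The negation `N₁(x) = 2^(−2^(−log₂(−log₂ x)))` for `x ∈ (0,1)`,
with `N₁ 0 = 1` and `N₁ 1 = 0`. -/
noncomputable def Nneg1 : ℝ → ℝ := fun x =>
  if x = 0 then 1 else if x = 1 then 0
  else (2 : ℝ) ^ (-((2 : ℝ) ^ (-(Real.logb 2 (-(Real.logb 2 x))))))

/-- The negation `N₂(x) = (N₁(x))²`. -/
noncomputable def Nneg2 : ℝ → ℝ := fun x => (Nneg1 x) ^ (2 : ℕ)

lemma uPt_bounds (n : ℤ) : 0 < uPt n ∧ uPt n < 1 := by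
  unfold uPt
  refine ⟨by positivity, ?_⟩
  apply Real.rpow_lt_one_of_one_lt_of_neg (by norm_num)
  have : (0:ℝ) < 2 ^ n := by positivity
  linarith

lemma nn_form {x : ℝ} (hx : x ∈ Set.Ioo (0:ℝ) 1) :
    ∃ a : ℝ, 0 < a ∧ x = (2:ℝ) ^ (-a) ∧ Nneg1 x = (2:ℝ) ^ (-a⁻¹) := by
  have h1 : Real.logb 2 x < 0 := Real.logb_neg (by norm_num) hx.1 hx.2
  refine ⟨-Real.logb 2 x, by linarith, ?_, ?_⟩
  · rw [neg_neg, Real.rpow_logb (by norm_num) (by norm_num) hx.1]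
  · have h0 : x ≠ 0 := hx.1.ne'
    have h2 : x ≠ 1 := hx.2.ne
    simp only [Nneg1, h0, h2, if_false]
    rw [Real.rpow_neg (by norm_num : (0:ℝ) ≤ 2) (Real.logb 2 (-Real.logb 2 x)),
      Real.rpow_logb (by norm_num) (by norm_num) (by linarith)]

lemma nn_val {a : ℝ} (ha : 0 < a) : Nneg1 ((2:ℝ) ^ (-a)) = (2:ℝ) ^ (-a⁻¹) := by
  have hx : (2:ℝ) ^ (-a) ∈ Set.Ioo (0:ℝ) 1 :=
    ⟨by positivity, Real.rpow_lt_one_of_one_lt_of_neg (by norm_num) (by linarith)⟩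
  obtain ⟨b, hb, h1, h2⟩ := nn_form hx
  have : -a = -b := (Real.rpow_right_inj (by norm_num) (by norm_num)).1 h1
  have : a = b := by linarith
  rw [h2, this]

lemma nn_zero : Nneg1 0 = 1 := by simp [Nneg1]

lemma nn_one : Nneg1 1 = 0 := by simp [Nneg1]

lemma nn_cases {x : ℝ} (hx : x ∈ Set.Icc (0:ℝ) 1) : x = 0 ∨ x = 1 ∨ x ∈ Set.Ioo (0:ℝ) 1 := by
  rcases hx.1.eq_or_lt with h | h
  · exact Or.inl h.symm
  · rcases hx.2.eq_or_lt with h' | h'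
    · exact Or.inr (Or.inl h')
    · exact Or.inr (Or.inr ⟨h, h'⟩)

lemma nn_ioo {x : ℝ} (hx : x ∈ Set.Ioo (0:ℝ) 1) : Nneg1 x ∈ Set.Ioo (0:ℝ) 1 := by
  obtain ⟨a, ha, h1, h2⟩ := nn_form hx
  rw [h2]
  have : 0 < a⁻¹ := by positivity
  exact ⟨by positivity, Real.rpow_lt_one_of_one_lt_of_neg (by norm_num) (by linarith)⟩

lemma nn_icc {x : ℝ} (hx : x ∈ Set.Icc (0:ℝ) 1) : Nneg1 x ∈ Set.Icc (0:ℝ) 1 := by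
  rcases nn_cases hx with rfl | rfl | h
  · simp [nn_zero]
  · simp [nn_one]
  · exact Set.Ioo_subset_Icc_self (nn_ioo h)

lemma nn_invol {x : ℝ} (hx : x ∈ Set.Icc (0:ℝ) 1) : Nneg1 (Nneg1 x) = x := by
  rcases nn_cases hx with rfl | rfl | h
  · simp [nn_zero, nn_one]
  · simp [nn_zero, nn_one]
  · obtain ⟨a, ha, h1, h2⟩ := nn_form h
    rw [h2, nn_val (by positivity), inv_inv, h1]

lemma nn_strict : StrictAntiOn Nneg1 (Set.Icc 0 1) := by
  intro x hx y hy hxy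
  rcases nn_cases hx with rfl | rfl | h
  · rcases nn_cases hy with rfl | rfl | h'
    · exact absurd hxy (lt_irrefl _)
    · simp [nn_zero, nn_one]
    · rw [nn_zero]; exact (nn_ioo h').2
  · exact absurd hxy (not_lt.2 hy.2)
  · rcases nn_cases hy with rfl | rfl | h'
    · exact absurd hxy (not_lt.2 hx.1)
    · rw [nn_one]; exact (nn_ioo h).1
    · obtain ⟨a, ha, h1, h2⟩ := nn_form h
      obtain ⟨b, hb, h3, h4⟩ := nn_form h'
      rw [h2, h4]
      rw [h1, h3] at hxy
      have h5 : -a < -b := (Real.rpow_lt_rpow_left_iff (by norm_num)).1 hxy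
      apply (Real.rpow_lt_rpow_left_iff (by norm_num)).2
      have : a⁻¹ < b⁻¹ := inv_strictAnti₀ hb (by linarith)
      linarith

lemma nn_cont : ContinuousOn Nneg1 (Set.Icc 0 1) := by
  rw [continuousOn_iff_continuous_restrict]
  let g : Set.Icc (0:ℝ) 1 → (Set.Icc (0:ℝ) 1)ᵒᵈ := fun x =>
    OrderDual.toDual ⟨Nneg1 x, nn_icc x.2⟩
  have hm : Monotone g := fun x y hxy => nn_strict.antitoneOn x.2 y.2 hxy
  have hs : Function.Surjective g := fun y =>
    ⟨⟨Nneg1 (OrderDual.ofDual y).1, nn_icc (OrderDual.ofDual y).2⟩,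
      Subtype.ext (nn_invol (OrderDual.ofDual y).2)⟩
  have hc : Continuous g := hm.continuous_of_surjective hs
  have hc' : Continuous (fun x => (OrderDual.ofDual (g x) : Set.Icc (0:ℝ) 1)) :=
    continuous_ofDual.comp hc
  exact continuous_subtype_val.comp hc'

lemma sq_strict : StrictAntiOn Nneg2 (Set.Icc 0 1) := by
  intro x hx y hy hxy
  exact pow_lt_pow_left₀ (nn_strict hx hy hxy) (nn_icc hy).1 (by norm_num)

lemma sq_icc {x : ℝ} (hx : x ∈ Set.Icc (0:ℝ) 1) : Nneg2 x ∈ Set.Icc (0:ℝ) 1 :=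
  ⟨pow_nonneg (nn_icc hx).1 _, pow_le_one₀ (nn_icc hx).1 (nn_icc hx).2⟩

lemma block {y : ℝ} (hy : y ∈ Set.Ioo (0:ℝ) 1) :
    ∃ m : ℤ, y ∈ Set.Ioc (uPt (m + 1)) (uPt m) := by
  obtain ⟨a, ha, h1, -⟩ := nn_form hy
  obtain ⟨m, hm1, hm2⟩ := exists_mem_Ico_zpow ha (by norm_num : (1:ℝ) < 2)
  refine ⟨m, ?_, ?_⟩
  · rw [h1]
    exact (Real.rpow_lt_rpow_left_iff (by norm_num)).2 (by linarith)
  · rw [h1]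
    exact (Real.rpow_le_rpow_left_iff (by norm_num)).2 (by linarith)

theorem stmt18 (U₁ : ℝ → ℝ → ℝ)
    (htop : ∀ x ∈ Set.Icc (0:ℝ) 1, ∀ y ∈ Set.Icc (0:ℝ) 1, max x y = 1 → U₁ x y = 1)
    (hbot : ∀ x ∈ Set.Icc (0:ℝ) 1, ∀ y ∈ Set.Icc (0:ℝ) 1,
      min x y = 0 → max x y < 1 → U₁ x y = 0)
    (hmid : ∀ n m : ℤ, ∀ x ∈ Set.Ioc (uPt (n + 1)) (uPt n), ∀ y ∈ Set.Ioc (uPt (m + 1)) (uPt m),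
      U₁ x y = min (x ^ ((2 : ℝ) ^ m)) (y ^ ((2 : ℝ) ^ n)))
    (hU₁ : IsUninorm U₁ (1/2)) (hd₁ : U₁ 1 0 = 1) :
    -- (i) `N₁` and `N₂` are continuous, strictly decreasing fuzzy negations and
    -- `N₁(2^(−2^n)) = 2^(−2^(−n))`
    (IsFuzzyNegation Nneg1 ∧ ContinuousOn Nneg1 (Set.Icc 0 1) ∧
      StrictAntiOn Nneg1 (Set.Icc 0 1) ∧
      IsFuzzyNegation Nneg2 ∧ ContinuousOn Nneg2 (Set.Icc 0 1) ∧
      StrictAntiOn Nneg2 (Set.Icc 0 1) ∧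
      (∀ n : ℤ, Nneg1 (uPt n) = uPt (-n))) ∧
    -- (ii) `U₂(x,y) = U₁(2^(−1/2), U₁(x,y))` is a disjunctive uninorm with neutral 1/4
    (IsUninorm (fun x y => U₁ (uPt (-1)) (U₁ x y)) (1/4) ∧
      U₁ (uPt (-1)) (U₁ 1 0) = 1) ∧
    -- (iii) `U₂(N₂(x), y) = U₁(N₁(x), y)`
    (∀ x ∈ Set.Icc (0:ℝ) 1, ∀ y ∈ Set.Icc (0:ℝ) 1,
      U₁ (uPt (-1)) (U₁ (Nneg2 x) y) = U₁ (Nneg1 x) y) := by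
  obtain ⟨he, hI, hc, ha, hmr, hml, hn⟩ := hU₁
  have hu : uPt (-1) ∈ Set.Icc (0:ℝ) 1 := ⟨(uPt_bounds _).1.le, (uPt_bounds _).2.le⟩
  have hS : ∀ y ∈ Set.Icc (0:ℝ) 1, U₁ (uPt (-1)) y = Real.sqrt y := by
    intro y hy
    rcases nn_cases hy with rfl | rfl | h
    · rw [Real.sqrt_zero]
      exact hbot _ hu _ hy (min_eq_right hu.1) (by rw [max_eq_left hu.1]; exact (uPt_bounds _).2)
    · rw [Real.sqrt_one]
      exact htop _ hu _ hy (max_eq_right hu.2)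
    · obtain ⟨m, hm⟩ := block h
      have hx : uPt (-1) ∈ Set.Ioc (uPt (-1 + 1)) (uPt (-1)) := by
        refine ⟨?_, le_rfl⟩
        exact (Real.rpow_lt_rpow_left_iff (by norm_num)).2 (by norm_num)
      rw [hmid _ m _ hx _ hm]
      have e1 : (2:ℝ) ^ (-1:ℤ) = 1/2 := by norm_num
      have e2 : uPt (-1) ^ ((2:ℝ) ^ m) = uPt m ^ ((1:ℝ)/2) := by
        unfold uPt
        rw [← Real.rpow_mul (by norm_num), ← Real.rpow_mul (by norm_num), e1]
        congr 1
        ring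
      rw [e1, e2, Real.sqrt_eq_rpow]
      exact min_eq_right (Real.rpow_le_rpow hy.1 hm.2 (by norm_num))
  have h14 : (1/4:ℝ) ∈ Set.Icc (0:ℝ) 1 := by constructor <;> norm_num
  have hq : U₁ (uPt (-1)) (1/4) = 1/2 := by
    rw [hS _ h14, show (1/4:ℝ) = (1/2)^2 by norm_num, Real.sqrt_sq (by norm_num)]
  refine ⟨⟨⟨fun x hx => nn_icc hx, nn_zero, nn_one, fun x hx y hy h =>
      nn_strict.antitoneOn hx hy h⟩, nn_cont, nn_strict,
    ⟨fun x hx => sq_icc hx, by simp [Nneg2, nn_zero], by simp [Nneg2, nn_one],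
      fun x hx y hy h => sq_strict.antitoneOn hx hy h⟩, nn_cont.pow 2, sq_strict, ?_⟩,
    ⟨⟨h14, ?_, ?_, ?_, ?_, ?_, ?_⟩, ?_⟩, ?_⟩
  · intro n
    unfold uPt
    rw [nn_val (by positivity), zpow_neg]
  · intro x hx y hy
    exact hI _ hu _ (hI _ hx _ hy)
  · intro x hx y hy
    simp only [hc x hx y hy]
  · intro x hx y hy z hz
    have hxy := hI _ hx _ hy
    have hyz := hI _ hy _ hz
    show U₁ _ (U₁ (U₁ _ (U₁ x y)) z) = U₁ _ (U₁ x (U₁ _ (U₁ y z)))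
    rw [ha _ hu _ hxy _ hz, ha _ hx _ hy _ hz, ← ha _ hu _ hx _ hyz, hc _ hu _ hx,
      ha _ hx _ hu _ hyz]
  · intro x hx y hy z hz h
    exact hmr _ hu _ (hI _ hx _ hy) _ (hI _ hx _ hz) (hmr _ hx _ hy _ hz h)
  · intro x hx y hy z hz h
    exact hmr _ hu _ (hI _ hx _ hz) _ (hI _ hy _ hz) (hml _ hx _ hy _ hz h)
  · intro x hx
    show U₁ _ (U₁ x (1/4)) = x
    rw [hc _ hx _ h14, ← ha _ hu _ h14 _ hx, hq, hc _ he _ hx, hn _ hx]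
  · rw [hd₁, hS 1 (by simp), Real.sqrt_one]
  · intro x hx y hy
    rw [← ha _ hu _ (sq_icc hx) _ hy, hS _ (sq_icc hx)]
    unfold Nneg2
    rw [Real.sqrt_sq (nn_icc hx).1]
end

section
/- Let e ∈ (0,1) and define U : [0,1]² → [0,1] by: U(x,y) = 1 if max(x,y) = 1; U(x,y) = max(x,y) if x, y ∈ (e,1); U(x,y) = 0 if x, y ∈ [0,e); U(x,y) = x if y = e; U(x,y) = y if x = e; and U(x,y) = min(x,y) otherwise. Then U is a disjunctive uninorm with neutral element e, and for every α ∈ (0,1) with α ≠ e the function s ↦ U(s, α) is not continuous; consequently, for any continuous fuzzy negation N, the only horizontal cut s ↦ U(s, α) with α ∈ (0,1) that is continuous and increasing with U(0,α) = 0 and U(1,α) = 1 is the one with α = e. -/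
open Classical in
/-- The uninorm of Example 4 whose underlying functions are the maximum t-conorm
and the drastic product t-norm. -/
noncomputable def Udp (e : ℝ) : ℝ → ℝ → ℝ := fun x y =>
  if max x y = 1 then 1
  else if e < x ∧ x < 1 ∧ e < y ∧ y < 1 then max x y
  else if x < e ∧ y < e then 0
  else if y = e then x
  else if x = e then y
  else min x y

theorem Udp_spec (e : ℝ) (he : e ∈ Set.Ioo (0:ℝ) 1) (x y : ℝ) (hx : x ∈ Set.Icc (0:ℝ) 1)
    (hy : y ∈ Set.Icc (0:ℝ) 1) :
    (x = 1 → Udp e x y = 1) ∧ (y = 1 → Udp e x y = 1) ∧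
    (x = e → Udp e x y = y) ∧ (y = e → Udp e x y = x) ∧
    (x < e → y < e → Udp e x y = 0) ∧
    (x < e → e < y → y < 1 → Udp e x y = x) ∧
    (y < e → e < x → x < 1 → Udp e x y = y) ∧
    (e < x → x < 1 → e < y → y < 1 → x ≤ y → Udp e x y = y) ∧
    (e < x → x < 1 → e < y → y < 1 → y ≤ x → Udp e x y = x) := by
  obtain ⟨h0, h1⟩ := he
  obtain ⟨hx0, hx1⟩ := hx
  obtain ⟨hy0, hy1⟩ := hy
  unfold Udp
  refine ⟨?_, ?_, ?_, ?_, ?_, ?_, ?_, ?_, ?_⟩ <;> grind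

theorem Udp_mem (e : ℝ) (he : e ∈ Set.Ioo (0:ℝ) 1) (x y : ℝ) (hx : x ∈ Set.Icc (0:ℝ) 1)
    (hy : y ∈ Set.Icc (0:ℝ) 1) : Udp e x y ∈ Set.Icc (0:ℝ) 1 := by
  have := Udp_spec e he x y hx hy
  grind

theorem Udp_comm (e : ℝ) (he : e ∈ Set.Ioo (0:ℝ) 1) (x y : ℝ) (hx : x ∈ Set.Icc (0:ℝ) 1)
    (hy : y ∈ Set.Icc (0:ℝ) 1) : Udp e x y = Udp e y x := by
  have := Udp_spec e he x y hx hy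
  have := Udp_spec e he y x hy hx
  grind

theorem Udp_mono (e : ℝ) (he : e ∈ Set.Ioo (0:ℝ) 1) (x y z : ℝ) (hx : x ∈ Set.Icc (0:ℝ) 1)
    (hy : y ∈ Set.Icc (0:ℝ) 1) (hz : z ∈ Set.Icc (0:ℝ) 1) (h : y ≤ z) :
    Udp e x y ≤ Udp e x z := by
  have := Udp_spec e he x y hx hy
  have := Udp_spec e he x z hx hz
  grind

set_option maxHeartbeats 4000000 in
theorem Udp_assoc (e : ℝ) (he : e ∈ Set.Ioo (0:ℝ) 1) (x y z : ℝ) (hx : x ∈ Set.Icc (0:ℝ) 1)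
    (hy : y ∈ Set.Icc (0:ℝ) 1) (hz : z ∈ Set.Icc (0:ℝ) 1) :
    Udp e (Udp e x y) z = Udp e x (Udp e y z) := by
  have h1 := Udp_spec e he x y hx hy
  have h2 := Udp_spec e he y z hy hz
  have h3 := Udp_spec e he x z hx hz
  have h4 := Udp_spec e he _ z (Udp_mem e he x y hx hy) hz
  have h5 := Udp_spec e he x _ hx (Udp_mem e he y z hy hz)
  obtain ⟨h0, h1⟩ := he
  obtain ⟨hx0, hx1⟩ := hx
  obtain ⟨hy0, hy1⟩ := hy
  obtain ⟨hz0, hz1⟩ := hz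
  have key : ∀ t : ℝ, t ≤ 1 → t = 1 ∨ t < e ∨ t = e ∨ (e < t ∧ t < 1) := by
    intro t ht
    grind
  rcases key x hx1 with a | a | a | a <;> rcases key y hy1 with b | b | b | b <;>
    rcases key z hz1 with c | c | c | c <;>
    rcases le_total x y with k | k <;> rcases le_total y z with l | l <;>
    rcases le_total x z with m | m <;> clear key <;> grind

theorem Udp_disc (e : ℝ) (he : e ∈ Set.Ioo (0:ℝ) 1) (α : ℝ) (hα : α ∈ Set.Ioo (0:ℝ) 1)
    (hne : α ≠ e) : ¬ ContinuousOn (fun s => Udp e s α) (Set.Icc 0 1) := by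
  intro hc
  have hα' : α ∈ Set.Icc (0:ℝ) 1 := ⟨hα.1.le, hα.2.le⟩
  have h := intermediate_value_Icc (zero_le_one' ℝ) hc
  have s0 := Udp_spec e he 0 α (by simp) hα'
  have s1 := Udp_spec e he 1 α (by simp) hα'
  obtain ⟨e0, e1⟩ := he
  have f0 : Udp e 0 α = 0 := by grind
  have f1 : Udp e 1 α = 1 := by grind
  simp only [f0, f1] at h
  rcases lt_or_gt_of_ne hne with hl | hl
  · obtain ⟨s, hs, hv⟩ := h (show α / 2 ∈ Set.Icc (0:ℝ) 1 by grind)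
    have := Udp_spec e ⟨e0, e1⟩ s α hs hα'
    simp only at hv
    grind
  · obtain ⟨s, hs, hv⟩ := h (show (e + α) / 2 ∈ Set.Icc (0:ℝ) 1 by grind)
    have := Udp_spec e ⟨e0, e1⟩ s α hs hα'
    simp only at hv
    grind

theorem stmt19 (e : ℝ) (he : e ∈ Set.Ioo (0:ℝ) 1) :
    IsUninorm (Udp e) e ∧ Udp e 1 0 = 1 ∧
    (∀ α ∈ Set.Ioo (0:ℝ) 1, α ≠ e → ¬ ContinuousOn (fun s => Udp e s α) (Set.Icc 0 1)) ∧
    (∀ α ∈ Set.Ioo (0:ℝ) 1,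
      (ContinuousOn (fun s => Udp e s α) (Set.Icc 0 1) ∧
        MonotoneOn (fun s => Udp e s α) (Set.Icc 0 1) ∧
        Udp e 0 α = 0 ∧ Udp e 1 α = 1) → α = e) := by
  have hI : e ∈ Set.Icc (0:ℝ) 1 := ⟨he.1.le, he.2.le⟩
  refine ⟨⟨hI, fun x hx y hy => Udp_mem e he x y hx hy, fun x hx y hy => Udp_comm e he x y hx hy,
    fun x hx y hy z hz => Udp_assoc e he x y z hx hy hz,
    fun x hx y hy z hz h => Udp_mono e he x y z hx hy hz h, ?_,
    fun x hx => (Udp_spec e he x e hx hI).2.2.2.1 rfl⟩,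
    (Udp_spec e he 1 0 (by simp) (by simp)).1 rfl, fun α hα hne => Udp_disc e he α hα hne, ?_⟩
  · intro x hx y hy z hz h
    rw [Udp_comm e he x z hx hz, Udp_comm e he y z hy hz]
    exact Udp_mono e he z x y hz hx hy h
  · intro α hα h
    by_contra hne
    exact Udp_disc e he α hα hne h.1
end
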